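/- For every integer n ≥ 3, the triply-refined ASM generating function satisfies: (z2−z1)(z3−1)·Ztri_n(x,y;z1,z2,z3)·Z_{n−2}(x,y) = ((z2−1)(z3−1)−y·z2·z3)·z1·Zadj_{n−1}(x,y;z1,z3)·Z_{n−1}(x,y;z2) − (x(z1−1)(z3−1)−y)·z1·z2·z3·Zbaradj_{n−1}(x,y;z2,z3)·Z_{n−1}(x,y;z1) − (z1−1)(z3−1)·z2·Z_{n−1}(x,y;z2)·Z_{n−2}(x,y) + (z2−1)(z3−1)·z1·(x·z2·z3)^{n−1}·Z_{n−1}(x,y;z1)·Z_{n−2}(x,y), as an identity of polynomials in ℤ[x,y,z1,z2,z3]. -/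

import Mathlib

open Finset

/-- The `n × n` integer matrix encoded by `e`, with entries in `{-1, 0, 1}`. -/
def asmMat {n : ℕ} (e : Fin n → Fin n → Fin 3) : Fin n → Fin n → ℤ :=
  fun i j => (e i j : ℤ) - 1

/-- `A` is an alternating sign matrix: all entries lie in `{-1, 0, 1}`, every
partial row sum and every partial column sum is `0` or `1` (equivalently, the
nonzero entries of each row and of each column alternate in sign), and every
complete row sum and column sum is `1`. -/
def IsASM {n : ℕ} (A : Fin n → Fin n → ℤ) : Prop :=
  (∀ i j, A i j = -1 ∨ A i j = 0 ∨ A i j = 1) ∧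
  (∀ (i j : Fin n), (∑ j' ∈ univ.filter (fun j' : Fin n => j' ≤ j), A i j') = 0 ∨
    (∑ j' ∈ univ.filter (fun j' : Fin n => j' ≤ j), A i j') = 1) ∧
  (∀ (i j : Fin n), (∑ i' ∈ univ.filter (fun i' : Fin n => i' ≤ i), A i' j) = 0 ∨
    (∑ i' ∈ univ.filter (fun i' : Fin n => i' ≤ i), A i' j) = 1) ∧
  (∀ i : Fin n, (∑ j, A i j) = 1) ∧
  (∀ j : Fin n, (∑ i, A i j) = 1)

/-- `ν(A)`, the number of generalized inversions of `A`. -/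
def nuASM {n : ℕ} (A : Fin n → Fin n → ℤ) : ℕ :=
  (∑ i : Fin n, ∑ i' : Fin n, ∑ j : Fin n, ∑ j' : Fin n,
      if i < i' ∧ j' ≤ j then A i j * A i' j' else 0).toNat

/-- `μ(A)`, the number of entries of `A` equal to `-1`. -/
def muASM {n : ℕ} (A : Fin n → Fin n → ℤ) : ℕ :=
  (univ.filter (fun p : Fin n × Fin n => A p.1 p.2 = -1)).card

/-- `ρT(A)`, the number of `0`'s to the left of the `1` in the top row of `A`. -/
def rhoT {n : ℕ} (A : Fin n → Fin n → ℤ) : ℕ :=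
  (univ.filter (fun j : Fin n =>
    A ⟨0, j.pos⟩ j = 0 ∧ ∃ j' : Fin n, j < j' ∧ A ⟨0, j.pos⟩ j' = 1)).card

/-- `ρR(A)`, the number of `0`'s below the `1` in the right-most column of `A`. -/
def rhoR {n : ℕ} (A : Fin n → Fin n → ℤ) : ℕ :=
  (univ.filter (fun i : Fin n =>
    A i ⟨n - 1, Nat.sub_lt i.pos Nat.one_pos⟩ = 0 ∧
      ∃ i' : Fin n, i' < i ∧ A i' ⟨n - 1, Nat.sub_lt i.pos Nat.one_pos⟩ = 1)).card

/-- `ρB(A)`, the number of `0`'s to the right of the `1` in the bottom row of `A`. -/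
def rhoB {n : ℕ} (A : Fin n → Fin n → ℤ) : ℕ :=
  (univ.filter (fun j : Fin n =>
    A ⟨n - 1, Nat.sub_lt j.pos Nat.one_pos⟩ j = 0 ∧
      ∃ j' : Fin n, j' < j ∧ A ⟨n - 1, Nat.sub_lt j.pos Nat.one_pos⟩ j' = 1)).card

/-- `ρL(A)`, the number of `0`'s above the `1` in the left-most column of `A`. -/
def rhoL {n : ℕ} (A : Fin n → Fin n → ℤ) : ℕ :=
  (univ.filter (fun i : Fin n =>
    A i ⟨0, i.pos⟩ = 0 ∧ ∃ i' : Fin n, i < i' ∧ A i' ⟨0, i.pos⟩ = 1)).card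

open Classical in
/-- The quadruply-refined ASM generating function
`Zqua_n(x,y;z1,z2,z3,z4) = Σ_A x^{ν(A)} y^{μ(A)} z1^{ρT(A)} z2^{ρR(A)} z3^{ρB(A)} z4^{ρL(A)}`. -/
noncomputable def Zqua (n : ℕ) {R : Type*} [CommRing R] (x y z1 z2 z3 z4 : R) : R :=
  ∑ e : Fin n → Fin n → Fin 3,
    if IsASM (asmMat e) then
      x ^ nuASM (asmMat e) * y ^ muASM (asmMat e) * z1 ^ rhoT (asmMat e) *
        z2 ^ rhoR (asmMat e) * z3 ^ rhoB (asmMat e) * z4 ^ rhoL (asmMat e)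
    else 0

/-- Adjacent-boundary doubly-refined generating function `Zadj_n(x,y;z1,z2)`. -/
noncomputable def Zadj (n : ℕ) {R : Type*} [CommRing R] (x y z1 z2 : R) : R :=
  Zqua n x y z1 1 1 z2

/-- Alternative adjacent-boundary doubly-refined generating function `Zbaradj_n(x,y;z1,z2)`. -/
noncomputable def Zbaradj (n : ℕ) {R : Type*} [CommRing R] (x y z1 z2 : R) : R :=
  Zqua n x y z1 z2 1 1

/-- Triply-refined generating function `Ztri_n(x,y;z1,z2,z3)`. -/
noncomputable def Ztri (n : ℕ) {R : Type*} [CommRing R] (x y z1 z2 z3 : R) : R :=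
  Zqua n x y z1 1 z2 z3

/-- Opposite-boundary doubly-refined generating function `Zopp_n(x,y;z1,z2)`. -/
noncomputable def Zopp (n : ℕ) {R : Type*} [CommRing R] (x y z1 z2 : R) : R :=
  Zqua n x y z1 1 z2 1

/-- Singly-refined generating function `Z_n(x,y;z)`. -/
noncomputable def Zsing (n : ℕ) {R : Type*} [CommRing R] (x y z : R) : R :=
  Zqua n x y z 1 1 1

/-- Unrefined generating function `Z_n(x,y)`.  Note `Zun 0 x y = 1`. -/
noncomputable def Zun (n : ℕ) {R : Type*} [CommRing R] (x y : R) : R :=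
  Zqua n x y 1 1 1 1

/-!
The partial row and column sums of an alternating sign matrix are the edge states of a six-vertex
configuration with domain wall boundary, so `Zqua` is a lattice sum with modified weights along
the boundary. For a parametrization of `x` and `y` the bulk weights are a gauge transformation of
weights solving the Yang–Baxter equation, whose partition function is symmetric in its spectral
parameters and is therefore given by the Izergin–Korepin determinant. The Desnanot–Jacobi identity
for this determinant is a quadratic relation between partition functions.

A boundary variable corresponds to a change of the spectral parameter of one row or column. We use
the first and the last row and the first column. Where such a row and such a column cross, the
weight of a corner vertex is not the product of the two boundary factors; splitting off the
configurations with that corner vertex gives the terms without a factor `Ztri`, `Zadj` or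
`Zbaradj`. This proves the identity for generic complex values of the variables, hence as an
identity of polynomials with integer coefficients.
-/

open Matrix (vecCons)

/-! ### Lattice sums with domain wall boundary -/

/-- Weights of the six vertices allowed by the ice rule; each field is the weight of the local
configuration listed for it in `VertexWeights.weight`. -/
@[ext]
structure VertexWeights (R : Type*) where
  a₁ : R
  a₂ : R
  b₁ : R
  b₂ : R
  c₁ : R
  c₂ : R

namespace VertexWeights

variable {R S : Type*}

/-- The weight of a vertex with given states of its left, top, right and bottom edges. -/
def weight [Zero R] (w : VertexWeights R) : (left top right bottom : Bool) → R
  | false, false, false, false => w.a₁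
  | true, true, true, true => w.a₂
  | false, true, false, true => w.b₁
  | true, false, true, false => w.b₂
  | false, false, true, true => w.c₁
  | true, true, false, false => w.c₂
  | _, _, _, _ => 0

/-- The weights obtained by applying a function to each of the six weights. -/
def map (f : R → S) (w : VertexWeights R) : VertexWeights S :=
  ⟨f w.a₁, f w.a₂, f w.b₁, f w.b₂, f w.c₁, f w.c₂⟩

/-- The weights seen after reflecting the lattice in its main diagonal. -/
def transpose (w : VertexWeights R) : VertexWeights R :=
  ⟨w.a₁, w.a₂, w.b₂, w.b₁, w.c₁, w.c₂⟩

/-- The weights seen after turning the lattice upside down. All vertical edges are negated, so that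
the domain wall boundary is preserved. -/
def flip (w : VertexWeights R) : VertexWeights R :=
  ⟨w.b₁, w.b₂, w.a₁, w.a₂, w.c₁, w.c₂⟩

variable [Zero R] (w : VertexWeights R)

theorem weight_eq_zero {l u r d : Bool} (h : r.toNat + u.toNat ≠ l.toNat + d.toNat) :
    w.weight l u r d = 0 := by
  revert h
  cases l <;> cases u <;> cases r <;> cases d <;> simp [weight]

theorem weight_map [Zero S] {f : R → S} (hf : f 0 = 0) (l u r d : Bool) :
    (w.map f).weight l u r d = f (w.weight l u r d) := by
  cases l <;> cases u <;> cases r <;> cases d <;> simp only [weight, map, hf]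

theorem weight_transpose (l u r d : Bool) :
    w.transpose.weight u l d r = w.weight l u r d := by
  cases l <;> cases u <;> cases r <;> cases d <;> rfl

theorem weight_flip (l u r d : Bool) : w.flip.weight l (!d) r (!u) = w.weight l u r d := by
  cases l <;> cases u <;> cases r <;> cases d <;> rfl

end VertexWeights

section Lattice

variable {R S : Type*} {n : ℕ}

/-- Domain wall boundary conditions for an assignment `h` of states to the horizontal edges and `v`
to the vertical edges of an `n × n` lattice. Vertex `(i, j)` has left edge `h i j.castSucc`, right
edge `h i j.succ`, top edge `v i.castSucc j` and bottom edge `v i.succ j`. -/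
structure IsDomainWall (h : Fin n → Fin (n + 1) → Bool) (v : Fin (n + 1) → Fin n → Bool) :
    Prop where
  left : ∀ i, h i 0 = false
  right : ∀ i, h i (Fin.last n) = true
  top : ∀ j, v 0 j = false
  bottom : ∀ j, v (Fin.last n) j = true

/-- The ice rule at every vertex. -/
def IsIce (h : Fin n → Fin (n + 1) → Bool) (v : Fin (n + 1) → Fin n → Bool) : Prop :=
  ∀ i j, (h i j.succ).toNat + (v i.castSucc j).toNat = (h i j.castSucc).toNat + (v i.succ j).toNat

variable {h : Fin n → Fin (n + 1) → Bool} {v : Fin (n + 1) → Fin n → Bool}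

theorem IsDomainWall.transpose (hb : IsDomainWall h v) :
    IsDomainWall (fun i k => v k i) (fun k j => h j k) :=
  ⟨hb.top, hb.bottom, hb.left, hb.right⟩

theorem IsIce.transpose (hice : IsIce h v) : IsIce (fun i k => v k i) (fun k j => h j k) :=
  fun i j => by rw [add_comm, ← hice j i, add_comm]

theorem IsDomainWall.flip (hb : IsDomainWall h v) :
    IsDomainWall (fun i k => h i.rev k) (fun k j => !v k.rev j) where
  left i := hb.left i.rev
  right i := hb.right i.rev
  top j := by simp [hb.bottom]
  bottom j := by simp [hb.top]

variable [CommSemiring R] [CommSemiring S]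

/-- The product of the vertex weights of a configuration. -/
def configWeight (ω : Fin n → Fin n → VertexWeights R) (h : Fin n → Fin (n + 1) → Bool)
    (v : Fin (n + 1) → Fin n → Bool) : R :=
  ∏ i, ∏ j, (ω i j).weight (h i j.castSucc) (v i.castSucc j) (h i j.succ) (v i.succ j)

open Classical in
/-- The sum of the weights of all configurations with domain wall boundary. -/
noncomputable def latticeSum (ω : Fin n → Fin n → VertexWeights R) : R :=
  ∑ h : Fin n → Fin (n + 1) → Bool, ∑ v : Fin (n + 1) → Fin n → Bool,
    if IsDomainWall h v then configWeight ω h v else 0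

theorem latticeSum_map (φ : R →+* S) (ω : Fin n → Fin n → VertexWeights R) :
    latticeSum (fun i j => (ω i j).map φ) = φ (latticeSum ω) := by
  simp only [latticeSum, configWeight, VertexWeights.weight_map _ (map_zero φ), map_sum,
    apply_ite φ, map_prod, map_zero]

theorem latticeSum_mul (ρ : Fin n → Fin n → R) (ω : Fin n → Fin n → VertexWeights R) :
    latticeSum (fun i j => (ω i j).map (ρ i j * ·)) = (∏ i, ∏ j, ρ i j) * latticeSum ω := by
  simp only [latticeSum, configWeight, VertexWeights.weight_map _ (mul_zero _), Finset.mul_sum,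
    mul_ite, mul_zero, Finset.prod_mul_distrib]

theorem weight_ne_zero_of_configWeight_ne_zero {ω : Fin n → Fin n → VertexWeights R}
    (hne : configWeight ω h v ≠ 0) (i j : Fin n) :
    (ω i j).weight (h i j.castSucc) (v i.castSucc j) (h i j.succ) (v i.succ j) ≠ 0 := fun h0 =>
  hne (Finset.prod_eq_zero (Finset.mem_univ i) (Finset.prod_eq_zero (Finset.mem_univ j) h0))

theorem isIce_of_configWeight_ne_zero {ω : Fin n → Fin n → VertexWeights R}
    (hne : configWeight ω h v ≠ 0) : IsIce h v := fun i j =>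
  not_not.1 fun h0 => weight_ne_zero_of_configWeight_ne_zero hne i j
    ((ω i j).weight_eq_zero h0)

theorem configWeight_eq_zero_of_not_isIce (ω : Fin n → Fin n → VertexWeights R)
    (hice : ¬IsIce h v) : configWeight ω h v = 0 :=
  not_not.1 (mt isIce_of_configWeight_ne_zero hice)

theorem latticeSum_congr {ω ω' : Fin n → Fin n → VertexWeights R}
    (H : ∀ h v, IsDomainWall h v → IsIce h v → configWeight ω h v = configWeight ω' h v) :
    latticeSum ω = latticeSum ω' := by
  refine Finset.sum_congr rfl fun h _ => Finset.sum_congr rfl fun v _ => ?_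
  split_ifs with hb
  · by_cases hice : IsIce h v
    · exact H h v hb hice
    · rw [configWeight_eq_zero_of_not_isIce ω hice, configWeight_eq_zero_of_not_isIce ω' hice]
  · rfl

theorem configWeight_transpose (ω : Fin n → Fin n → VertexWeights R)
    (h : Fin n → Fin (n + 1) → Bool) (v : Fin (n + 1) → Fin n → Bool) :
    configWeight (fun i j => (ω j i).transpose) (fun i k => v k i) (fun k j => h j k) =
      configWeight ω h v := by
  simp only [configWeight, VertexWeights.weight_transpose]
  exact Finset.prod_comm

open Classical in
theorem latticeSum_transpose (ω : Fin n → Fin n → VertexWeights R) :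
    latticeSum (fun i j => (ω j i).transpose) = latticeSum ω := by
  rw [latticeSum, Finset.sum_comm,
    ← (Equiv.piComm fun (_ : Fin n) (_ : Fin (n + 1)) => Bool).sum_comp]
  refine Finset.sum_congr rfl fun h _ => ?_
  rw [← (Equiv.piComm fun (_ : Fin (n + 1)) (_ : Fin n) => Bool).sum_comp]
  exact Finset.sum_congr rfl fun v _ =>
    if_congr ⟨IsDomainWall.transpose, IsDomainWall.transpose⟩ (configWeight_transpose ω h v) rfl

theorem configWeight_flip (ω : Fin n → Fin n → VertexWeights R)
    (h : Fin n → Fin (n + 1) → Bool) (v : Fin (n + 1) → Fin n → Bool) :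
    configWeight (fun i j => (ω i.rev j).flip) (fun i k => h i.rev k) (fun k j => !v k.rev j) =
      configWeight ω h v := by
  simp only [configWeight, Fin.rev_castSucc, Fin.rev_succ, VertexWeights.weight_flip]
  exact Equiv.prod_comp Fin.revPerm
    fun i => ∏ j, (ω i j).weight (h i j.castSucc) (v i.castSucc j) (h i j.succ) (v i.succ j)

open Classical in
theorem latticeSum_flip (ω : Fin n → Fin n → VertexWeights R) :
    latticeSum (fun i j => (ω i.rev j).flip) = latticeSum ω := by
  rw [latticeSum, ← (Fin.revPerm.arrowCongr (Equiv.refl (Fin (n + 1) → Bool))).sum_comp]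
  refine Finset.sum_congr rfl fun h _ => ?_
  rw [← (Fin.revPerm.arrowCongr ((Equiv.refl (Fin n)).arrowCongr Equiv.boolNot)).sum_comp]
  refine Finset.sum_congr rfl fun v _ =>
    if_congr ⟨fun hb => ?_, IsDomainWall.flip⟩ (configWeight_flip ω h v) rfl
  convert IsDomainWall.flip hb <;> simp

/-- A vertex weight enters every configuration linearly. -/
theorem latticeSum_eq_add_of_vertex {ω ω₁ ω₂ : Fin n → Fin n → VertexWeights R} (i₀ j₀ : Fin n)
    (k₁ k₂ : R)
    (h₀ : ∀ l u r d, (ω i₀ j₀).weight l u r d =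
      k₁ * (ω₁ i₀ j₀).weight l u r d + k₂ * (ω₂ i₀ j₀).weight l u r d)
    (h₁ : ∀ i j, (i, j) ≠ (i₀, j₀) → ω₁ i j = ω i j)
    (h₂ : ∀ i j, (i, j) ≠ (i₀, j₀) → ω₂ i j = ω i j) :
    latticeSum ω = k₁ * latticeSum ω₁ + k₂ * latticeSum ω₂ := by
  simp only [latticeSum, Finset.mul_sum, ← Finset.sum_add_distrib, mul_ite, mul_zero]
  refine Finset.sum_congr rfl fun h _ => Finset.sum_congr rfl fun v _ => ?_
  split_ifs
  swap
  · exact (add_zero 0).symm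
  have factor : ∀ ω' : Fin n → Fin n → VertexWeights R,
      (∀ i j, (i, j) ≠ (i₀, j₀) → ω' i j = ω i j) → configWeight ω' h v =
        (ω' i₀ j₀).weight (h i₀ j₀.castSucc) (v i₀.castSucc j₀) (h i₀ j₀.succ) (v i₀.succ j₀) *
          ∏ p ∈ univ.erase (i₀, j₀), (ω p.1 p.2).weight (h p.1 p.2.castSucc) (v p.1.castSucc p.2)
            (h p.1 p.2.succ) (v p.1.succ p.2) := by
    intro ω' hω'
    rw [configWeight, ← Fintype.prod_prod_type' fun i j => (ω' i j).weight (h i j.castSucc)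
      (v i.castSucc j) (h i j.succ) (v i.succ j), ← Finset.mul_prod_erase _ _ (mem_univ (i₀, j₀))]
    exact congrArg _ (Finset.prod_congr rfl fun p hp => by rw [hω' p.1 p.2 (ne_of_mem_erase hp)])
  rw [factor ω fun _ _ _ => rfl, factor ω₁ h₁, factor ω₂ h₂, h₀]
  ring

end Lattice

/-! ### Freezing a corner -/

section Corner

variable {R : Type*} [CommSemiring R] {n : ℕ}

/-- Extension of a horizontal edge configuration by a new first row and first column, as forced by
a new corner vertex of type `c₁`. -/
def borderHorizontal (h : Fin n → Fin (n + 1) → Bool) : Fin (n + 1) → Fin (n + 2) → Bool :=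
  Fin.cons (Fin.cons false fun _ => true) fun i => Fin.cons false (h i)

/-- Extension of a vertical edge configuration by a new first row and first column, as forced by a
new corner vertex of type `c₁`. -/
def borderVertical (v : Fin (n + 1) → Fin n → Bool) : Fin (n + 2) → Fin (n + 1) → Bool :=
  Fin.cons (fun _ => false) fun k => Fin.cons true (v k)

theorem borderHorizontal_injective : Function.Injective (borderHorizontal (n := n)) :=
  fun _ _ e => funext fun i => (Fin.cons_inj.1 (congrFun (Fin.cons_inj.1 e).2 i)).2

theorem borderVertical_injective : Function.Injective (borderVertical (n := n)) :=
  fun _ _ e => funext fun k => (Fin.cons_inj.1 (congrFun (Fin.cons_inj.1 e).2 k)).2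

theorem IsDomainWall.border {h : Fin n → Fin (n + 1) → Bool} {v : Fin (n + 1) → Fin n → Bool}
    (hb : IsDomainWall h v) : IsDomainWall (borderHorizontal h) (borderVertical v) where
  left := by simp [borderHorizontal, Fin.forall_fin_succ]
  right := by simp [borderHorizontal, Fin.forall_fin_succ (n := n), ← Fin.succ_last, hb.right]
  top := by simp [borderVertical]
  bottom := by simp [borderVertical, Fin.forall_fin_succ (n := n), ← Fin.succ_last, hb.bottom]

theorem configWeight_border (ω : Fin (n + 1) → Fin (n + 1) → VertexWeights R)
    {h : Fin n → Fin (n + 1) → Bool} {v : Fin (n + 1) → Fin n → Bool} (hb : IsDomainWall h v) :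
    configWeight ω (borderHorizontal h) (borderVertical v) =
      (ω 0 0).c₁ * (∏ j : Fin n, (ω 0 j.succ).b₂) * (∏ i : Fin n, (ω i.succ 0).b₁) *
        configWeight (fun i j => ω i.succ j.succ) h v := by
  simp only [configWeight, Fin.prod_univ_succ, borderHorizontal, borderVertical, Fin.castSucc_zero,
    ← Fin.succ_castSucc, Fin.cons_zero, Fin.cons_succ, hb.left, hb.top, Finset.prod_mul_distrib,
    VertexWeights.weight]
  ring

theorem isDomainWall_of_border {h : Fin n → Fin (n + 1) → Bool} {v : Fin (n + 1) → Fin n → Bool}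
    (hb : IsDomainWall (borderHorizontal h) (borderVertical v))
    (hice : IsIce (borderHorizontal h) (borderVertical v)) : IsDomainWall h v where
  left i := by
    have := hice i.succ 0
    simpa [borderHorizontal, borderVertical, ← Fin.succ_castSucc] using this
  right i := by simpa [borderHorizontal, ← Fin.succ_last] using hb.right i.succ
  top j := by
    have := hice 0 j.succ
    simpa [borderHorizontal, borderVertical, ← Fin.succ_castSucc] using this
  bottom j := by simpa [borderVertical, ← Fin.succ_last] using hb.bottom j.succ

variable {h : Fin (n + 1) → Fin (n + 2) → Bool} {v : Fin (n + 2) → Fin (n + 1) → Bool}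

theorem IsIce.first_row_eq_true (hice : IsIce h v) (htop : ∀ j, v 0 j = false) (h01 : h 0 1 = true)
    (j : Fin (n + 1)) : h 0 j.succ = true := by
  induction j using Fin.induction with
  | zero => exact h01
  | succ j ih =>
    have hvertex := hice 0 j.succ
    rw [← Fin.succ_castSucc, ih, Fin.castSucc_zero, htop] at hvertex
    cases hj : h 0 j.succ.succ
    · rw [hj] at hvertex
      simp only [Bool.toNat_false, add_zero, Bool.toNat_true] at hvertex
      omega
    · rfl

theorem exists_border_eq (hb : IsDomainWall h v) (hice : IsIce h v) (h01 : h 0 1 = true) :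
    ∃ h' v', borderHorizontal h' = h ∧ borderVertical v' = v := by
  have hrow := hice.first_row_eq_true hb.top h01
  have v10 : v 1 0 = true := by
    have corner := hice 0 0
    rw [Fin.castSucc_zero, hb.left, hb.top, hrow] at corner
    exact Bool.toNat_eq_one.1 (by simpa using corner.symm)
  have hcol := hice.transpose.first_row_eq_true hb.left v10
  refine ⟨fun i k => h i.succ k.succ, fun k j => v k.succ j.succ, ?_, ?_⟩
  · ext i k
    cases i using Fin.cases <;> cases k using Fin.cases <;>
      simp [borderHorizontal, hb.left, hrow]
  · ext k j
    cases k using Fin.cases <;> [skip; cases j using Fin.cases] <;>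
      simp [borderVertical, hb.top, hcol]

theorem latticeSum_eq_of_corner (ω : Fin (n + 1) → Fin (n + 1) → VertexWeights R)
    (hω : (ω 0 0).a₁ = 0) :
    latticeSum ω = (ω 0 0).c₁ * (∏ j : Fin n, (ω 0 j.succ).b₂) *
      (∏ i : Fin n, (ω i.succ 0).b₁) * latticeSum fun i j => ω i.succ j.succ := by
  classical
  rw [latticeSum, latticeSum, ← Fintype.sum_prod_type', ← Fintype.sum_prod_type', Finset.mul_sum]
  refine (Fintype.sum_of_injective (Prod.map borderHorizontal borderVertical)
    (borderHorizontal_injective.prodMap borderVertical_injective) _ _ ?_ ?_).symm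
  · rintro ⟨h, v⟩ hrange
    by_contra hne
    obtain ⟨(hb : IsDomainWall h v), (hne : configWeight ω h v ≠ 0)⟩ := ite_ne_right_iff.1 hne
    have h01 : h 0 1 = true := by
      by_contra h01
      have hvertex := weight_ne_zero_of_configWeight_ne_zero hne 0 0
      rw [Fin.castSucc_zero, hb.left, hb.top, Fin.succ_zero_eq_one,
        Bool.eq_false_iff.2 h01] at hvertex
      cases hv : v 1 0 <;> rw [hv] at hvertex
      · exact hvertex hω
      · exact hvertex rfl
    obtain ⟨h', v', rfl, rfl⟩ := exists_border_eq hb (isIce_of_configWeight_ne_zero hne) h01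
    exact hrange ⟨(h', v'), rfl⟩
  · rintro ⟨h, v⟩
    by_cases hb : IsDomainWall h v
    · simp only [Prod.map, if_pos hb, if_pos hb.border, configWeight_border ω hb]
    · simp only [if_neg hb, mul_zero]
      by_contra hne
      obtain ⟨hb', hne⟩ := ite_ne_right_iff.1 (Ne.symm hne)
      exact hb (isDomainWall_of_border hb' (isIce_of_configWeight_ne_zero hne))

end Corner

/-! ### Row transfer matrices and the Yang–Baxter equation -/

section PathSums

variable {ι M R : Type*} {n : ℕ}

theorem prod_ofFn_apply [Fintype ι] [DecidableEq ι] [CommSemiring R]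
    (A : Fin n → Matrix ι ι R) (a b : ι) :
    (List.ofFn A).prod a b = ∑ p : Fin (n + 1) → ι,
      if p 0 = a ∧ p (Fin.last n) = b then ∏ j, A j (p j.castSucc) (p j.succ) else 0 := by
  induction n generalizing a with
  | zero =>
    rw [← (Equiv.funUnique (Fin 1) ι).symm.sum_comp, Finset.sum_eq_single a]
    · simp [Matrix.one_apply]
    · rintro c - hc
      simp [hc]
    · simp
  | succ n ih =>
    have hcons : ∀ c (p : Fin (n + 1) → ι),
        (if (Fin.consEquiv fun _ => ι) (c, p) 0 = a ∧
            (Fin.consEquiv fun _ => ι) (c, p) (Fin.last (n + 1)) = b then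
          ∏ j, A j ((Fin.consEquiv fun _ => ι) (c, p) j.castSucc)
            ((Fin.consEquiv fun _ => ι) (c, p) j.succ) else 0) =
        if c = a then A 0 c (p 0) * if p (Fin.last n) = b then
          ∏ j : Fin n, A j.succ (p j.castSucc) (p j.succ) else 0 else 0 := by
      intro c p
      simp [Fin.consEquiv, Fin.prod_univ_succ, ← Fin.succ_last, ite_and]
    rw [List.ofFn_succ, List.prod_cons, Matrix.mul_apply, ← (Fin.consEquiv fun _ => ι).sum_comp,
      Fintype.sum_prod_type_right]
    simp only [ih, hcons, Finset.sum_ite_eq', Finset.mem_univ, if_true, Finset.mul_sum]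
    rw [Finset.sum_comm]
    exact Finset.sum_congr rfl fun p _ => by simp [ite_and]

theorem mul_prod_ofFn_eq_prod_ofFn_mul [Monoid M] (r : M) (f g : Fin n → M)
    (hfg : ∀ j, r * f j = g j * r) : r * (List.ofFn f).prod = (List.ofFn g).prod * r := by
  induction n with
  | zero => simp
  | succ n ih =>
    rw [List.ofFn_succ, List.ofFn_succ, List.prod_cons, List.prod_cons, ← mul_assoc, hfg, mul_assoc,
      ih _ _ fun j => hfg j.succ, mul_assoc]

end PathSums

section RowTransfer

variable {R S : Type*} [CommSemiring R] [CommSemiring S] {n : ℕ}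

/-- The transfer matrix of one row of vertices, indexed by the states of the vertical edges above
and below the row; the horizontal edges have domain wall boundary. -/
def rowTransfer (ω : Fin n → VertexWeights R) : Matrix (Fin n → Bool) (Fin n → Bool) R :=
  Matrix.of fun a b => (List.ofFn fun j =>
    (Matrix.of fun l r => (ω j).weight l (a j) r (b j) : Matrix Bool Bool R)).prod false true

theorem rowTransfer_apply (ω : Fin n → VertexWeights R) (a b : Fin n → Bool) :
    rowTransfer ω a b = ∑ p : Fin (n + 1) → Bool, if p 0 = false ∧ p (Fin.last n) = true then
      ∏ j, (ω j).weight (p j.castSucc) (a j) (p j.succ) (b j) else 0 := by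
  simp only [rowTransfer, Matrix.of_apply, prod_ofFn_apply]

theorem rowTransfer_map (φ : R →+* S) (ω : Fin n → VertexWeights R) :
    rowTransfer (fun j => (ω j).map φ) = (rowTransfer ω).map φ := by
  ext a b
  simp only [Matrix.map_apply, rowTransfer_apply, map_sum, apply_ite φ, map_prod, map_zero,
    VertexWeights.weight_map _ (map_zero φ)]

theorem latticeSum_eq_prod_rowTransfer (ω : Fin n → Fin n → VertexWeights R) :
    latticeSum ω =
      (List.ofFn fun i => rowTransfer (ω i)).prod (fun _ => false) (fun _ => true) := by
  rw [prod_ofFn_apply, latticeSum, Finset.sum_comm]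
  refine Finset.sum_congr rfl fun v _ => ?_
  simp only [rowTransfer_apply, Finset.prod_univ_sum, Fintype.piFinset_univ]
  by_cases hv : v 0 = (fun _ => false) ∧ v (Fin.last n) = fun _ => true
  · rw [if_pos hv]
    refine Finset.sum_congr rfl fun h _ => ?_
    by_cases hh : ∀ i, h i 0 = false ∧ h i (Fin.last n) = true
    · rw [if_pos ⟨fun i => (hh i).1, fun i => (hh i).2, congrFun hv.1, congrFun hv.2⟩]
      exact (Finset.prod_congr rfl fun i _ => if_pos (hh i)).symm
    · obtain ⟨i, hi⟩ := not_forall.1 hh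
      rw [if_neg fun hb => hi ⟨hb.left i, hb.right i⟩]
      exact (Finset.prod_eq_zero (Finset.mem_univ i) (if_neg hi)).symm
  · rw [if_neg hv]
    exact Finset.sum_eq_zero fun h _ => if_neg fun hb => hv ⟨funext hb.top, funext hb.bottom⟩

/-- The operator on a pair of horizontal edges given by two vertically adjacent vertices, with
outer vertical edges `a` and `b`. -/
def twoRowVertex (w w' : VertexWeights R) (a b : Bool) : Matrix (Bool × Bool) (Bool × Bool) R :=
  Matrix.of fun p q => ∑ m, w.weight p.1 a q.1 m * w'.weight p.2 m q.2 b

theorem rowTransfer_mul_apply (ω ω' : Fin n → VertexWeights R) (a b : Fin n → Bool) :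
    (rowTransfer ω * rowTransfer ω') a b =
      (List.ofFn fun j => twoRowVertex (ω j) (ω' j) (a j) (b j)).prod (false, false)
        (true, true) := by
  have hpair : ∀ p q : Fin (n + 1) → Bool,
      (∑ m : Fin n → Bool,
        (if p 0 = false ∧ p (Fin.last n) = true then
          ∏ j, (ω j).weight (p j.castSucc) (a j) (p j.succ) (m j) else 0) *
        if q 0 = false ∧ q (Fin.last n) = true then
          ∏ j, (ω' j).weight (q j.castSucc) (m j) (q j.succ) (b j) else 0) =
      if (p 0, q 0) = (false, false) ∧ (p (Fin.last n), q (Fin.last n)) = (true, true) then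
        ∏ j, twoRowVertex (ω j) (ω' j) (a j) (b j) (p j.castSucc, q j.castSucc)
          (p j.succ, q j.succ) else 0 := by
    intro p q
    by_cases hp : p 0 = false ∧ p (Fin.last n) = true <;>
      by_cases hq : q 0 = false ∧ q (Fin.last n) = true
    · simp only [hp, hq, twoRowVertex, Matrix.of_apply, and_self, if_true,
        Finset.prod_univ_sum, Fintype.piFinset_univ, Finset.prod_mul_distrib]
    all_goals
      rw [if_neg (by simp only [Prod.mk.injEq]; tauto)]
      simp [hp, hq]
  rw [Matrix.mul_apply, prod_ofFn_apply,
    ← (Equiv.arrowProdEquivProdArrow (Fin (n + 1)) (fun _ => Bool) (fun _ => Bool)).symm.sum_comp,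
    Fintype.sum_prod_type]
  simp only [rowTransfer_apply, Finset.sum_mul_sum]
  rw [Finset.sum_comm]
  refine Finset.sum_congr rfl fun p _ => ?_
  rw [Finset.sum_comm]
  exact Finset.sum_congr rfl fun q _ => hpair p q

end RowTransfer

section PartitionFunction

open Polynomial (C X)

variable {R S : Type*} [CommRing R] [CommRing S] {n : ℕ}

/-- The six-vertex weights with crossing parameter `s` and spectral parameter `t`, which solve the
Yang–Baxter equation. They are `√t · s` times the usual symmetric weights, up to moving a factor
`t` between `c₁` and `c₂`; this keeps them polynomial. -/
def sixVertex (s t : R) : VertexWeights R where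
  a₁ := s ^ 2 * t - 1
  a₂ := s ^ 2 * t - 1
  b₁ := s * (t - 1)
  b₂ := s * (t - 1)
  c₁ := s ^ 2 - 1
  c₂ := (s ^ 2 - 1) * t

theorem sixVertex_map (φ : R →+* S) (s t : R) :
    (sixVertex s t).map φ = sixVertex (φ s) (φ t) := by
  simp [sixVertex, VertexWeights.map]

/-- The matrix which exchanges the spectral parameters `u` and `v` of two adjacent rows. -/
def braidMatrix (s u v : R) : Matrix (Bool × Bool) (Bool × Bool) R :=
  Matrix.of fun
    | (false, false), (false, false) => s ^ 2 * v - u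
    | (true, true), (true, true) => s ^ 2 * v - u
    | (false, true), (false, true) => (s ^ 2 - 1) * u
    | (true, false), (true, false) => (s ^ 2 - 1) * v
    | (false, true), (true, false) => s * (v - u)
    | (true, false), (false, true) => s * (v - u)
    | _, _ => 0

theorem yangBaxter (s u v y : R) (a b : Bool) :
    braidMatrix s u v * twoRowVertex (sixVertex s (u * y)) (sixVertex s (v * y)) a b =
      twoRowVertex (sixVertex s (v * y)) (sixVertex s (u * y)) a b * braidMatrix s u v := by
  ext ⟨p, p'⟩ ⟨q, q'⟩
  simp only [Matrix.mul_apply, Fintype.sum_prod_type, Fintype.sum_bool, braidMatrix,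
    twoRowVertex, Matrix.of_apply]
  cases a <;> cases b <;> cases p <;> cases p' <;> cases q <;> cases q' <;>
    simp only [sixVertex, VertexWeights.weight, mul_zero, zero_mul, add_zero, zero_add] <;> ring

theorem mul_rowTransfer_mul_comm (s u v : R) (Y : Fin n → R) (a b : Fin n → Bool) :
    (s ^ 2 * v - u) * ((rowTransfer fun j => sixVertex s (u * Y j)) *
        rowTransfer fun j => sixVertex s (v * Y j)) a b =
      (s ^ 2 * v - u) * ((rowTransfer fun j => sixVertex s (v * Y j)) *
        rowTransfer fun j => sixVertex s (u * Y j)) a b := by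
  have intertwine := congrFun₂ (mul_prod_ofFn_eq_prod_ofFn_mul (braidMatrix s u v) _ _
    fun j => yangBaxter s u v (Y j) (a j) (b j)) (false, false) (true, true)
  rw [Matrix.mul_apply, Matrix.mul_apply] at intertwine
  simp only [Fintype.sum_prod_type, Fintype.sum_bool, braidMatrix, Matrix.of_apply, zero_mul,
    mul_zero, zero_add, add_zero] at intertwine
  rw [rowTransfer_mul_apply, rowTransfer_mul_apply, intertwine, mul_comm]

theorem commute_rowTransfer_sixVertex (s u v : R) (Y : Fin n → R) :
    Commute (rowTransfer fun j => sixVertex s (u * Y j))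
      (rowTransfer fun j => sixVertex s (v * Y j)) := by
  -- `s ^ 2 * v - u` need not be regular in `R`, but it is once `u` is an indeterminate.
  have hreg : IsRegular (X - C (s ^ 2 * v)) := (Polynomial.monic_X_sub_C _).isRegular
  have generic : (rowTransfer fun j => sixVertex (C s) (X * C (Y j))) *
        (rowTransfer fun j => sixVertex (C s) (C v * C (Y j))) =
      (rowTransfer fun j => sixVertex (C s) (C v * C (Y j))) *
        rowTransfer fun j => sixVertex (C s) (X * C (Y j)) := by
    ext1 a b
    refine hreg.left ?_
    simp only [Polynomial.C_mul, Polynomial.C_pow]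
    linear_combination -mul_rowTransfer_mul_comm (C s) X (C v) (fun j => C (Y j)) a b
  have specialized := congrArg (Polynomial.evalRingHom u).mapMatrix generic
  simp only [map_mul, RingHom.mapMatrix_apply, ← rowTransfer_map, sixVertex_map] at specialized
  simpa only [commute_iff_eq, Polynomial.coe_evalRingHom, Polynomial.eval_C,
    Polynomial.eval_X] using specialized

/-- The domain wall partition function with one spectral parameter for each row and each
column. -/
noncomputable def partitionFunction (s : R) (X Y : Fin n → R) : R :=
  latticeSum fun i j => sixVertex s (X i * Y j)

theorem partitionFunction_map (φ : R →+* S) (s : R) (X Y : Fin n → R) :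
    partitionFunction (φ s) (φ ∘ X) (φ ∘ Y) = φ (partitionFunction s X Y) := by
  simp only [partitionFunction, ← latticeSum_map, sixVertex_map, map_mul, Function.comp_apply]

theorem partitionFunction_comp_perm_left (s : R) (X Y : Fin n → R) (σ : Equiv.Perm (Fin n)) :
    partitionFunction s (X ∘ σ) Y = partitionFunction s X Y := by
  rw [partitionFunction, partitionFunction, latticeSum_eq_prod_rowTransfer,
    latticeSum_eq_prod_rowTransfer]
  refine congrFun₂ (List.Perm.prod_eq' (M := Matrix (Fin n → Bool) (Fin n → Bool) R)
    (σ.ofFn_comp_perm fun i => rowTransfer fun j => sixVertex s (X i * Y j)) ?_) _ _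
  rw [List.pairwise_ofFn]
  exact fun i j _ => commute_rowTransfer_sixVertex s _ _ Y

theorem partitionFunction_comm (s : R) (X Y : Fin n → R) :
    partitionFunction s X Y = partitionFunction s Y X := by
  rw [partitionFunction, ← latticeSum_transpose]
  simp only [partitionFunction, sixVertex, VertexWeights.transpose, mul_comm]

theorem partitionFunction_fin_zero (s : R) (X Y : Fin 0 → R) : partitionFunction s X Y = 1 := by
  simp [partitionFunction, latticeSum_eq_prod_rowTransfer, Matrix.one_apply,
    eq_iff_true_of_subsingleton]

theorem partitionFunction_vecCons_of_sq_mul_eq_one {s x y : R} (hxy : s ^ 2 * (x * y) = 1)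
    (X Y : Fin n → R) :
    partitionFunction s (vecCons x X) (vecCons y Y) =
      (s ^ 2 - 1) * (∏ j, s * (x * Y j - 1)) * (∏ i, s * (X i * y - 1)) *
        partitionFunction s X Y := by
  rw [partitionFunction, latticeSum_eq_of_corner _ (by simp [sixVertex, hxy])]
  simp [sixVertex, partitionFunction]

end PartitionFunction

/-! ### The Desnanot–Jacobi identity -/

section DesnanotJacobi

variable {R : Type*} [CommRing R] {n : ℕ}

theorem det_mul_det_adjugate_toBlocks₁₁ {m k : Type*} [Fintype m] [DecidableEq m] [Fintype k]
    [DecidableEq k] (A : Matrix (m ⊕ k) (m ⊕ k) R) :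
    A.det * A.adjugate.toBlocks₁₁.det = A.det ^ Fintype.card m * A.toBlocks₂₂.det := by
  obtain ⟨h₁₁, -, h₂₁, -⟩ : A.toBlocks₁₁ * A.adjugate.toBlocks₁₁ +
          A.toBlocks₁₂ * A.adjugate.toBlocks₂₁ = A.det • 1 ∧ _ ∧
        A.toBlocks₂₁ * A.adjugate.toBlocks₁₁ + A.toBlocks₂₂ * A.adjugate.toBlocks₂₁ = 0 ∧ _ := by
    have := A.mul_adjugate
    rw [← Matrix.fromBlocks_toBlocks A.adjugate, ← Matrix.fromBlocks_one, Matrix.fromBlocks_smul,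
      smul_zero, smul_zero] at this
    nth_rw 1 [← Matrix.fromBlocks_toBlocks A] at this
    rwa [Matrix.fromBlocks_multiply, Matrix.fromBlocks_inj] at this
  have triangular : A * Matrix.fromBlocks A.adjugate.toBlocks₁₁ 0 A.adjugate.toBlocks₂₁ 1 =
      Matrix.fromBlocks (A.det • 1) A.toBlocks₁₂ 0 A.toBlocks₂₂ := by
    nth_rw 1 [← Matrix.fromBlocks_toBlocks A]
    simp [Matrix.fromBlocks_multiply, h₁₁, h₂₁]
  simpa [Matrix.det_fromBlocks_zero₁₂, Matrix.det_fromBlocks_zero₂₁] using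
    congrArg Matrix.det triangular

theorem det_mul_det_mul_det_submatrix (A : Matrix (Fin (n + 2)) (Fin (n + 2)) R) :
    A.det * (A.det * (A.submatrix (Fin.succ ∘ Fin.succ) (Fin.succ ∘ Fin.succ)).det) = A.det *
      ((A.submatrix (Fin.succAbove 1) (Fin.succAbove 1)).det * (A.submatrix Fin.succ Fin.succ).det -
        (A.submatrix (Fin.succAbove 1) Fin.succ).det *
          (A.submatrix Fin.succ (Fin.succAbove 1)).det) := by
  let e : Fin 2 ⊕ Fin n ≃ Fin (n + 2) := finSumFinEquiv.trans (finCongr (add_comm 2 n))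
  have e_inl_zero : e (Sum.inl 0) = 0 := by ext; simp [e]
  have e_inl_one : e (Sum.inl 1) = 1 := by ext; simp [e]
  have e_inr (k : Fin n) : e (Sum.inr k) = k.succ.succ := by ext; simp [e]
  have jacobi := det_mul_det_adjugate_toBlocks₁₁ (A.submatrix e e)
  have h₂₂ : (A.submatrix e e).toBlocks₂₂ =
      A.submatrix (Fin.succ ∘ Fin.succ) (Fin.succ ∘ Fin.succ) := by
    ext i j
    simp [Matrix.toBlocks₂₂, e_inr]
  rw [Matrix.det_submatrix_equiv_self, Matrix.adjugate_submatrix_equiv_self, h₂₂,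
    Fintype.card_fin, Matrix.det_fin_two] at jacobi
  simp only [Matrix.toBlocks₁₁, Matrix.of_apply, Matrix.submatrix_apply, e_inl_zero, e_inl_one,
    Matrix.adjugate_fin_succ_eq_det_submatrix, Fin.succAbove_zero] at jacobi
  simp only [Fin.val_zero, Fin.val_one, add_zero, zero_add, pow_zero, pow_one, one_mul,
    Nat.reduceAdd, even_two, Even.neg_pow, one_pow, neg_mul, mul_neg, neg_neg] at jacobi
  linear_combination -jacobi

theorem desnanotJacobi (A : Matrix (Fin (n + 2)) (Fin (n + 2)) R) :
    A.det * (A.submatrix (Fin.succ ∘ Fin.succ) (Fin.succ ∘ Fin.succ)).det =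
      (A.submatrix (Fin.succAbove 1) (Fin.succAbove 1)).det * (A.submatrix Fin.succ Fin.succ).det -
        (A.submatrix (Fin.succAbove 1) Fin.succ).det *
          (A.submatrix Fin.succ (Fin.succAbove 1)).det := by
  -- `A.det` need not be regular, but the determinant of `X + A` is monic.
  have generic := (-A).charpoly_monic.isRegular.left
    (det_mul_det_mul_det_submatrix (-A).charmatrix)
  have hA : (Polynomial.evalRingHom 0).mapMatrix (-A).charmatrix = A := by
    ext i j
    simp [Matrix.charmatrix_apply, Matrix.diagonal_apply, apply_ite (Polynomial.eval (0 : R))]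
  have specialized := congrArg (Polynomial.evalRingHom 0) generic
  simp only [map_mul, map_sub, RingHom.map_det, RingHom.mapMatrix_apply,
    ← Matrix.submatrix_map] at specialized
  rw [RingHom.mapMatrix_apply] at hA
  simpa only [hA] using specialized

end DesnanotJacobi

/-! ### The Izergin–Korepin determinant -/

theorem exists_jump_of_le {n : ℕ} {g : Fin (n + 1) → Bool} {k m : Fin (n + 1)} (hkm : k ≤ m)
    (hk : g k = false) (hm : g m = true) :
    ∃ j : Fin n, k ≤ j.castSucc ∧ j.succ ≤ m ∧ g j.castSucc = false ∧ g j.succ = true := by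
  by_contra! no_jump
  have stays_false : ∀ i : Fin (n + 1), k ≤ i → i ≤ m → g i = false := by
    intro i
    induction i using Fin.induction with
    | zero => exact fun h _ => Fin.le_zero_iff.1 h ▸ hk
    | succ i ih =>
      intro hki him
      rcases hki.eq_or_lt with rfl | hki
      · exact hk
      · have hki : k ≤ i.castSucc := Fin.le_castSucc_iff.2 hki
        simpa using no_jump i hki him (ih hki (i.castSucc_le_succ.trans him))
  simp [stays_false m hkm le_rfl] at hm

section

variable {R S : Type*} [CommRing R] [CommRing S] {n : ℕ}

theorem prod_erase_zero (f : Fin (n + 1) → R) :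
    ∏ k ∈ univ.erase 0, f k = ∏ k : Fin n, f k.succ := by
  rw [Fin.univ_succ, Finset.erase_cons, Finset.prod_map]
  rfl

theorem prod_erase_succ (j : Fin n) (f : Fin (n + 1) → R) :
    ∏ k ∈ univ.erase j.succ, f k = f 0 * ∏ k ∈ univ.erase j, f k.succ := by
  have herase : univ.erase j.succ =
      cons 0 ((univ.erase j).map (Fin.succEmb n)) (by simp) := by
    ext k
    refine Fin.cases ?_ (fun k => ?_) k <;> simp [(Fin.succ_ne_zero _).symm]
  rw [herase, Finset.prod_cons, Finset.prod_map]
  rfl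

theorem det_vandermonde_fin_succ (X : Fin (n + 1) → R) :
    (Matrix.vandermonde X).det =
      (∏ i : Fin n, (X i.succ - X 0)) * (Matrix.vandermonde (X ∘ Fin.succ)).det := by
  rw [Matrix.det_vandermonde, Matrix.det_vandermonde, Fin.prod_univ_succ, Fin.prod_Ioi_zero]
  simp [Fin.prod_Ioi_succ]

/-- The product `a₁ * b₁` of the two kinds of weights in `sixVertex s t`. -/
def abWeight (s t : R) : R := (s ^ 2 * t - 1) * (s * (t - 1))

/-- The Izergin–Korepin matrix, with the denominators `abWeight s (X i * Y k)` of each row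
cleared. -/
def ikMatrix (s : R) (X Y : Fin n → R) : Matrix (Fin n) (Fin n) R :=
  Matrix.of fun i j => ∏ k ∈ univ.erase j, abWeight s (X i * Y k)

/-- The difference of the two sides of the Izergin–Korepin formula with all denominators
cleared. -/
noncomputable def ikDefect (s : R) (X Y : Fin n → R) : R :=
  partitionFunction s X Y * s ^ n ^ 2 *
      ((Matrix.vandermonde X).det * (Matrix.vandermonde Y).det) -
    (s * (s ^ 2 - 1)) ^ n * (ikMatrix s X Y).det

theorem abWeight_map (φ : R →+* S) (s t : R) : abWeight (φ s) (φ t) = φ (abWeight s t) := by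
  simp [abWeight]

theorem det_vandermonde_map (φ : R →+* S) (X : Fin n → R) :
    (Matrix.vandermonde (φ ∘ X)).det = φ (Matrix.vandermonde X).det := by
  simp [Matrix.det_vandermonde]

theorem ikDefect_map (φ : R →+* S) (s : R) (X Y : Fin n → R) :
    ikDefect (φ s) (φ ∘ X) (φ ∘ Y) = φ (ikDefect s X Y) := by
  have hik : ikMatrix (φ s) (φ ∘ X) (φ ∘ Y) = φ.mapMatrix (ikMatrix s X Y) := by
    ext i j
    simp [ikMatrix, ← abWeight_map]
  simp only [ikDefect, partitionFunction_map, det_vandermonde_map, hik, ← RingHom.map_det,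
    map_sub, map_mul, map_pow, map_one]

theorem ikDefect_comp_perm_right (s : R) (X Y : Fin n → R) (σ : Equiv.Perm (Fin n)) :
    ikDefect s X (Y ∘ σ) = (Equiv.Perm.sign σ : ℤ) * ikDefect s X Y := by
  have hZ : partitionFunction s X (Y ∘ σ) = partitionFunction s X Y := by
    rw [partitionFunction_comm, partitionFunction_comp_perm_left, partitionFunction_comm]
  have hV : (Matrix.vandermonde (Y ∘ σ)).det =
      (Equiv.Perm.sign σ : ℤ) * (Matrix.vandermonde Y).det := by
    rw [← Matrix.det_permute]
    rfl
  have hM : ikMatrix s X (Y ∘ σ) = (ikMatrix s X Y).submatrix id σ := by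
    ext i j
    exact Finset.prod_equiv σ (s := univ.erase j) (t := univ.erase (σ j)) (by simp) fun _ _ => rfl
  rw [ikDefect, ikDefect, hZ, hV, hM, Matrix.det_permute']
  ring

theorem ikDefect_vecCons_apply (s : R) (X : Fin n → R) (Y : Fin (n + 1) → R) (i : Fin n) :
    ikDefect s (vecCons (X i) X) Y = 0 := by
  rw [ikDefect, Matrix.det_zero_of_row_eq (Fin.succ_ne_zero i).symm,
    Matrix.det_zero_of_row_eq (M := ikMatrix _ _ _) (Fin.succ_ne_zero i).symm]
  · simp
  · ext j; simp [ikMatrix]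
  · ext j; simp [Matrix.vandermonde_apply]

theorem det_ikMatrix_vecCons_of_sq_mul_eq_one {s x y : R} (hxy : s ^ 2 * (x * y) = 1)
    (X Y : Fin n → R) :
    (ikMatrix s (vecCons x X) (vecCons y Y)).det =
      (∏ k, abWeight s (x * Y k)) * (∏ i, abWeight s (X i * y)) * (ikMatrix s X Y).det := by
  have row_zero (j : Fin n) : ikMatrix s (vecCons x X) (vecCons y Y) 0 j.succ = 0 := by
    simp [ikMatrix, prod_erase_succ, abWeight, hxy]
  have minor : (ikMatrix s (vecCons x X) (vecCons y Y)).submatrix Fin.succ Fin.succ =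
      Matrix.of fun i j => abWeight s (X i * y) * ikMatrix s X Y i j := by
    ext i j
    simp [ikMatrix, prod_erase_succ]
  rw [Matrix.det_succ_row_zero, Fin.sum_univ_succ]
  simp only [row_zero, Fin.succAbove_zero, minor, Matrix.det_mul_column]
  simp [ikMatrix, prod_erase_zero, mul_assoc]

theorem prod_abWeight_of_sq_mul_eq_one {s x y : R} (hxy : s ^ 2 * (x * y) = 1) (Y : Fin n → R) :
    ∏ k, abWeight s (x * Y k) =
      (s ^ 2 * x) ^ n * (∏ k, (Y k - y)) * ∏ k, s * (x * Y k - 1) := by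
  rw [← Fin.prod_const, ← Finset.prod_mul_distrib, ← Finset.prod_mul_distrib]
  refine Finset.prod_congr rfl fun k _ => ?_
  rw [abWeight]
  linear_combination (s * (x * Y k - 1)) * hxy

theorem ikDefect_vecCons_of_sq_mul_eq_one {s x y : R} (hxy : s ^ 2 * (x * y) = 1)
    {X Y : Fin n → R} (h : ikDefect s X Y = 0) :
    ikDefect s (vecCons x X) (vecCons y Y) = 0 := by
  have hX : ∏ i, abWeight s (X i * y) =
      (s ^ 2 * y) ^ n * (∏ i, (X i - x)) * ∏ i, s * (X i * y - 1) := by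
    simp_rw [fun i => mul_comm (X i) y]
    exact prod_abWeight_of_sq_mul_eq_one (mul_comm x y ▸ hxy) X
  have hpow : s ^ (n + 1) ^ 2 = s ^ n ^ 2 * ((s ^ 2 * x) ^ n * (s ^ 2 * y) ^ n) * s := by
    rw [← mul_pow, show s ^ 2 * x * (s ^ 2 * y) = s ^ 2 by linear_combination s ^ 2 * hxy]
    ring
  have hV (z : R) (Z : Fin n → R) : (Matrix.vandermonde (vecCons z Z)).det =
      (∏ i, (Z i - z)) * (Matrix.vandermonde Z).det := det_vandermonde_fin_succ _
  rw [ikDefect, partitionFunction_vecCons_of_sq_mul_eq_one hxy,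
    det_ikMatrix_vecCons_of_sq_mul_eq_one hxy, hV, hV, prod_abWeight_of_sq_mul_eq_one hxy, hX, hpow,
    pow_succ (s * _)]
  rw [ikDefect] at h
  linear_combination s * (s ^ 2 - 1) * (∏ j, s * (x * Y j - 1)) * (∏ i, s * (X i * y - 1)) *
    (s ^ 2 * x) ^ n * (s ^ 2 * y) ^ n * (∏ i, (X i - x)) * (∏ k, (Y k - y)) * h

end

section Degree

open Polynomial

variable {R : Type*} [CommRing R] {n : ℕ}

theorem natDegree_det_le_of_row_zero {d : ℕ} (A : Matrix (Fin (n + 1)) (Fin (n + 1)) R[X])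
    (N : Fin n → Fin (n + 1) → R) (hN : ∀ i j, A i.succ j = C (N i j))
    (hd : ∀ j, (A 0 j).natDegree ≤ d) : A.det.natDegree ≤ d := by
  rw [Matrix.det_succ_row_zero]
  refine natDegree_sum_le_of_forall_le _ _ fun j _ => ?_
  have minor : A.submatrix Fin.succ j.succAbove =
      C.mapMatrix (Matrix.of fun i k => N i (j.succAbove k)) := by
    ext1 i k
    simp [hN]
  rw [minor, ← RingHom.map_det, show (-1 : R[X]) ^ (j : ℕ) = C ((-1) ^ (j : ℕ)) by simp]
  exact (natDegree_mul_C_le _ _).trans ((natDegree_C_mul_le _ _).trans (hd j))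

theorem natDegree_weight_sixVertex_le (s y : R) (l t r b : Bool) :
    ((sixVertex (C s) (X * C y)).weight l t r b).natDegree ≤ 1 := by
  cases l <;> cases t <;> cases r <;> cases b <;>
    simp only [sixVertex, VertexWeights.weight] <;> compute_degree!

theorem natDegree_prod_weight_sixVertex_le (s : R) (Y : Fin (n + 1) → R)
    {p : Fin (n + 2) → Bool} (h₀ : p 0 = false) (h₁ : p (Fin.last _) = true)
    (b : Fin (n + 1) → Bool) :
    (∏ j, (sixVertex (C s) (X * C (Y j))).weight (p j.castSucc) false (p j.succ)
      (b j)).natDegree ≤ n := by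
  obtain ⟨j, -, -, hj, hj'⟩ := exists_jump_of_le (Fin.zero_le _) h₀ h₁
  have turn : ((sixVertex (C s) (X * C (Y j))).weight (p j.castSucc) false (p j.succ)
      (b j)).natDegree = 0 := by
    rw [hj, hj']
    cases b j
    · simp [VertexWeights.weight]
    · simp only [VertexWeights.weight, sixVertex, ← C_pow, ← C_1, ← C_sub, natDegree_C]
  rw [← Finset.mul_prod_erase _ _ (Finset.mem_univ j)]
  refine natDegree_mul_le.trans ?_
  rw [turn, zero_add]
  calc _ ≤ ∑ _k ∈ univ.erase j, 1 := (natDegree_prod_le _ _).trans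
        (Finset.sum_le_sum fun _ _ => natDegree_weight_sixVertex_le _ _ _ _ _ _)
    _ = n := by simp

theorem natDegree_partitionFunction_le (s : R) (Z : Fin n → R) (Y : Fin (n + 1) → R) :
    (partitionFunction (C s) (vecCons X (C ∘ Z)) (C ∘ Y)).natDegree ≤ n := by
  rw [partitionFunction, latticeSum]
  refine natDegree_sum_le_of_forall_le _ _ fun h _ =>
    natDegree_sum_le_of_forall_le _ _ fun v _ => ?_
  split_ifs with hb
  · have constant_rows : ∏ i : Fin n, ∏ j, (sixVertex (C s)
          (vecCons X (C ∘ Z) i.succ * (C ∘ Y) j)).weight (h i.succ j.castSucc)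
          (v i.succ.castSucc j) (h i.succ j.succ) (v i.succ.succ j) =
        C (∏ i : Fin n, ∏ j, (sixVertex s (Z i * Y j)).weight (h i.succ j.castSucc)
          (v i.succ.castSucc j) (h i.succ j.succ) (v i.succ.succ j)) := by
      simp only [map_prod, ← VertexWeights.weight_map _ (map_zero C), sixVertex_map, map_mul,
        Matrix.cons_val_succ, Function.comp_apply]
    rw [configWeight, Fin.prod_univ_succ, constant_rows]
    refine (natDegree_mul_C_le _ _).trans ?_
    simpa [hb.top] using natDegree_prod_weight_sixVertex_le s Y (hb.left 0) (hb.right 0) _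
  · simp

theorem natDegree_ikDefect_le (s : R) (Z : Fin n → R) (Y : Fin (n + 1) → R) :
    (ikDefect (C s) (vecCons X (C ∘ Z)) (C ∘ Y)).natDegree ≤ 2 * n := by
  have vandermonde_le : (Matrix.vandermonde (vecCons X (C ∘ Z))).det.natDegree ≤ n := by
    refine natDegree_det_le_of_row_zero _ (fun i j => Z i ^ (j : ℕ)) (fun i j => ?_) fun j => ?_
    · simp [Matrix.vandermonde_apply]
    · simpa [Matrix.vandermonde_apply] using
        (natDegree_X_pow_le _).trans (Nat.lt_succ_iff.1 j.2)
  have ikMatrix_le : (ikMatrix (C s) (vecCons X (C ∘ Z)) (C ∘ Y)).det.natDegree ≤ 2 * n := by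
    refine natDegree_det_le_of_row_zero _
      (fun i j => ∏ k ∈ univ.erase j, abWeight s (Z i * Y k)) (fun i j => ?_) fun j => ?_
    · simp [ikMatrix, abWeight]
    · calc _ ≤ ∑ k ∈ univ.erase j, 2 := (natDegree_prod_le _ _).trans
            (Finset.sum_le_sum fun k _ => by
              simp only [abWeight, Function.comp_apply, Matrix.cons_val_zero]
              compute_degree)
        _ = 2 * n := by simp [mul_comm]
  rw [ikDefect, det_vandermonde_map, ← C_pow, ← C_pow, ← C_1, ← C_sub, ← C_mul,
    ← C_pow]
  refine (natDegree_sub_le _ _).trans (max_le ?_ ((natDegree_C_mul_le _ _).trans ikMatrix_le))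
  rw [two_mul]
  exact natDegree_mul_le_of_le
    ((natDegree_mul_C_le _ _).trans (natDegree_partitionFunction_le s Z Y))
    ((natDegree_mul_C_le _ _).trans vandermonde_le)

end Degree

section Generic

variable {R : Type*} [CommRing R]

/-- Genericity of the spectral parameters: no cancellation occurs in the Izergin–Korepin
formula. -/
structure IsGeneric {ι κ : Type*} (s : R) (X : ι → R) (Y : κ → R) : Prop where
  injective_left : Function.Injective X
  injective_right : Function.Injective Y
  right_ne_zero : ∀ j, Y j ≠ 0
  abWeight_ne_zero : ∀ i j, abWeight s (X i * Y j) ≠ 0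

theorem IsGeneric.comp {ι κ ι' κ' : Type*} {s : R} {X : ι → R} {Y : κ → R} (h : IsGeneric s X Y)
    {e : ι' → ι} {f : κ' → κ} (he : Function.Injective e) (hf : Function.Injective f) :
    IsGeneric s (X ∘ e) (Y ∘ f) where
  injective_left := h.injective_left.comp he
  injective_right := h.injective_right.comp hf
  right_ne_zero _ := h.right_ne_zero _
  abWeight_ne_zero _ _ := h.abWeight_ne_zero _ _

theorem IsGeneric.map {S : Type*} [CommRing S] {ι κ : Type*} {s : R} {X : ι → R} {Y : κ → R}
    (h : IsGeneric s X Y) {φ : R →+* S} (hφ : Function.Injective φ) :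
    IsGeneric (φ s) (φ ∘ X) (φ ∘ Y) where
  injective_left := hφ.comp h.injective_left
  injective_right := hφ.comp h.injective_right
  right_ne_zero j := (map_ne_zero_iff φ hφ).2 (h.right_ne_zero j)
  abWeight_ne_zero i j := by
    simpa only [Function.comp_apply, ← map_mul, abWeight_map] using
      (map_ne_zero_iff φ hφ).2 (h.abWeight_ne_zero i j)

theorem isGeneric_mvPolynomial_X (n : ℕ) :
    IsGeneric (MvPolynomial.X none : MvPolynomial (Option (Fin n ⊕ Fin n)) ℤ)
      (fun i => MvPolynomial.X (some (Sum.inl i))) fun j => MvPolynomial.X (some (Sum.inr j)) where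
  injective_left i j h := by simpa using MvPolynomial.X_injective h
  injective_right i j h := by simpa using MvPolynomial.X_injective h
  right_ne_zero j := MvPolynomial.X_ne_zero _
  abWeight_ne_zero i j := by
    refine mul_ne_zero (fun h => ?_) (mul_ne_zero (MvPolynomial.X_ne_zero _) fun h => ?_) <;>
      simpa using congrArg MvPolynomial.constantCoeff h

/-- Polynomial identities in `s`, `X` and `Y` need only be checked for generic parameters in a
field. -/
theorem exists_generic_lift {n : ℕ} (s : R) (X Y : Fin n → R) :
    ∃ (P K : Type) (_ : CommRing P) (_ : Field K) (φ : P →+* R) (ι : P →+* K) (s' : P)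
      (X' Y' : Fin n → P), φ s' = s ∧ φ ∘ X' = X ∧ φ ∘ Y' = Y ∧ Function.Injective ι ∧
        IsGeneric (ι s') (ι ∘ X') (ι ∘ Y') := by
  let P := MvPolynomial (Option (Fin n ⊕ Fin n)) ℤ
  have hι : Function.Injective (algebraMap P (FractionRing P)) := IsFractionRing.injective _ _
  refine ⟨P, FractionRing P, inferInstance, inferInstance,
    MvPolynomial.eval₂Hom (Int.castRingHom R) fun o => o.elim s (Sum.elim X Y),
    algebraMap P _, _, _, _, ?_, ?_, ?_, hι, (isGeneric_mvPolynomial_X n).map hι⟩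
  · exact MvPolynomial.eval₂Hom_X' _ _ _
  · exact funext fun i => MvPolynomial.eval₂Hom_X' _ _ _
  · exact funext fun j => MvPolynomial.eval₂Hom_X' _ _ _

end Generic

section IzerginKorepin

open Polynomial (C X)

variable {n : ℕ}

theorem eval_ikDefect {R : Type*} [CommRing R] (s x : R) (Z : Fin n → R) (Y : Fin (n + 1) → R) :
    (ikDefect (C s) (vecCons X (C ∘ Z)) (C ∘ Y)).eval x = ikDefect s (vecCons x Z) Y := by
  rw [← Polynomial.coe_evalRingHom, ← ikDefect_map]
  congr 1
  · simp
  · ext i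
    refine Fin.cases ?_ (fun i => ?_) i <;> simp
  · ext i
    simp

variable {K : Type*} [Field K] {s : K}

theorem sq_ne_zero_of_isGeneric {X : Fin (n + 1) → K} {Y : Fin (n + 1) → K}
    (h : IsGeneric s X Y) : s ^ 2 ≠ 0 :=
  pow_ne_zero 2 fun hs => h.abWeight_ne_zero 0 0 (by simp [abWeight, hs])

theorem sq_mul_inv_mul_eq_one {y : K} (hs : s ^ 2 ≠ 0) (hy : y ≠ 0) :
    s ^ 2 * ((s ^ 2 * y)⁻¹ * y) = 1 := by
  rw [mul_left_comm, inv_mul_cancel₀ (mul_ne_zero hs hy)]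

theorem injective_sumElim_inv {X : Fin n → K} {Y : Fin (n + 1) → K} {x : K}
    (h : IsGeneric s (vecCons x X) Y) :
    Function.Injective (Sum.elim X fun j => (s ^ 2 * Y j)⁻¹) := by
  have hs := sq_ne_zero_of_isGeneric h
  refine Function.Injective.sumElim
    (h.injective_left.comp (Fin.succ_injective n)) (fun j j' hj => ?_) fun i j hij => ?_
  · exact h.injective_right (mul_left_cancel₀ hs (inv_injective hj))
  · refine h.abWeight_ne_zero i.succ j ?_
    rw [abWeight, Matrix.cons_val_succ, hij, sq_mul_inv_mul_eq_one hs (h.right_ne_zero j),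
      sub_self, zero_mul]

/-- Induction on `n`: as a polynomial in `X 0`, the defect has degree at most `2 * n`, but vanishes
at the `n` points `X i.succ` and at the `n + 1` points `(s ^ 2 * Y j)⁻¹`. -/
theorem ikDefect_eq_zero_of_isGeneric {X Y : Fin n → K} (h : IsGeneric s X Y) :
    ikDefect s X Y = 0 := by
  induction n with
  | zero => simp [ikDefect, partitionFunction_fin_zero]
  | succ n ih =>
    obtain ⟨x, X, rfl⟩ : ∃ x X', X = vecCons x X' := ⟨_, _, (Matrix.cons_head_tail X).symm⟩
    rw [← eval_ikDefect, Polynomial.eq_zero_of_natDegree_lt_card_of_eval_eq_zero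
      (ikDefect (C s) (vecCons Polynomial.X (C ∘ X)) (C ∘ Y)) (injective_sumElim_inv h),
      Polynomial.eval_zero]
    · rintro (i | j)
      · exact (eval_ikDefect _ _ _ _).trans (ikDefect_vecCons_apply s X Y i)
      · rw [Sum.elim_inr, eval_ikDefect]
        have swapped := ikDefect_comp_perm_right s (vecCons (s ^ 2 * Y j)⁻¹ X) Y (Equiv.swap 0 j)
        have root : ikDefect s (vecCons (s ^ 2 * Y j)⁻¹ X)
            (vecCons (Y j) ((Y ∘ Equiv.swap 0 j) ∘ Fin.succ)) = 0 :=
          ikDefect_vecCons_of_sq_mul_eq_one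
            (sq_mul_inv_mul_eq_one (sq_ne_zero_of_isGeneric h) (h.right_ne_zero j))
            (ih (h.comp (Fin.succ_injective n)
              ((Equiv.swap 0 j).injective.comp (Fin.succ_injective n))))
        have reorder : vecCons (Y j) ((Y ∘ Equiv.swap 0 j) ∘ Fin.succ) = Y ∘ Equiv.swap 0 j := by
          ext k
          refine Fin.cases ?_ (fun k => ?_) k <;> simp
        rw [reorder, swapped] at root
        exact ((Units.isUnit _).map (Int.castRingHom K)).mul_right_eq_zero.1 root
    · refine (Nat.lt_succ_of_le (natDegree_ikDefect_le s X Y)).trans_le ?_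
      simp only [Fintype.card_sum, Fintype.card_fin]
      omega

/-- The matrix of `ikMatrix` before denominators are cleared is a submatrix of this one. -/
def invWeightMatrix (s : K) : Matrix K K K :=
  Matrix.of fun x y => (abWeight s (x * y))⁻¹

theorem izerginKorepin {X Y : Fin n → K} (h : IsGeneric s X Y) :
    partitionFunction s X Y * s ^ n ^ 2 *
        ((Matrix.vandermonde X).det * (Matrix.vandermonde Y).det) =
      (s * (s ^ 2 - 1)) ^ n *
        ((∏ i, ∏ j, abWeight s (X i * Y j)) * ((invWeightMatrix s).submatrix X Y).det) := by
  have cleared : ikMatrix s X Y = Matrix.of fun i j =>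
      (∏ j, abWeight s (X i * Y j)) * (invWeightMatrix s).submatrix X Y i j := by
    ext i j
    rw [Matrix.of_apply, ← Finset.prod_erase_mul _ _ (mem_univ j)]
    exact (mul_inv_cancel_right₀ (h.abWeight_ne_zero i j) _).symm
  rw [← Matrix.det_mul_column, ← cleared]
  exact sub_eq_zero.1 (ikDefect_eq_zero_of_isGeneric h)

end IzerginKorepin

section DesnanotJacobi

variable {n : ℕ}

theorem det_vandermonde_comp_succAbove_one {R : Type*} [CommRing R] (X : Fin (n + 2) → R) :
    (Matrix.vandermonde (X ∘ Fin.succAbove 1)).det =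
      (∏ i : Fin n, (X i.succ.succ - X 0)) *
        (Matrix.vandermonde (X ∘ Fin.succ ∘ Fin.succ)).det := by
  rw [det_vandermonde_fin_succ]
  rfl

theorem det_vandermonde_fin_add_two {R : Type*} [CommRing R] (X : Fin (n + 2) → R) :
    (Matrix.vandermonde X).det =
      (X 1 - X 0) * (∏ i : Fin n, (X i.succ.succ - X 0)) *
        ((∏ i : Fin n, (X i.succ.succ - X 1)) *
          (Matrix.vandermonde (X ∘ Fin.succ ∘ Fin.succ)).det) := by
  rw [det_vandermonde_fin_succ, det_vandermonde_fin_succ (X ∘ Fin.succ), Fin.prod_univ_succ]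
  rfl

theorem partitionFunction_desnanotJacobi_of_isGeneric {K : Type*} [Field K] {s : K}
    {X Y : Fin (n + 2) → K} (h : IsGeneric s X Y) :
    s ^ 2 * (X 1 - X 0) * (Y 1 - Y 0) * partitionFunction s X Y *
        partitionFunction s (X ∘ Fin.succ ∘ Fin.succ) (Y ∘ Fin.succ ∘ Fin.succ) =
      abWeight s (X 0 * Y 1) * abWeight s (X 1 * Y 0) *
          partitionFunction s (X ∘ Fin.succAbove 1) (Y ∘ Fin.succAbove 1) *
          partitionFunction s (X ∘ Fin.succ) (Y ∘ Fin.succ) -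
        abWeight s (X 0 * Y 0) * abWeight s (X 1 * Y 1) *
          partitionFunction s (X ∘ Fin.succAbove 1) (Y ∘ Fin.succ) *
          partitionFunction s (X ∘ Fin.succ) (Y ∘ Fin.succAbove 1) := by
  have hsucc := Fin.succ_injective (n + 1)
  have hsucc₂ := hsucc.comp (Fin.succ_injective n)
  have habove : Function.Injective (Fin.succAbove (1 : Fin (n + 2))) :=
    Fin.succAbove_right_injective
  have h₂ := izerginKorepin h
  have h₀ := izerginKorepin (h.comp hsucc₂ hsucc₂)
  have h₀₀ := izerginKorepin (h.comp habove habove)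
  have h₁₁ := izerginKorepin (h.comp hsucc hsucc)
  have h₀₁ := izerginKorepin (h.comp habove hsucc)
  have h₁₀ := izerginKorepin (h.comp hsucc habove)
  have dj := desnanotJacobi ((invWeightMatrix s).submatrix X Y)
  simp only [Matrix.submatrix_submatrix] at dj
  have hs := pow_ne_zero_iff two_ne_zero |>.1 (sq_ne_zero_of_isGeneric h)
  have hX := Matrix.det_vandermonde_ne_zero_iff.2 h.injective_left
  have hY := Matrix.det_vandermonde_ne_zero_iff.2 h.injective_right
  simp only [det_vandermonde_comp_succAbove_one, det_vandermonde_fin_succ (_ ∘ Fin.succ),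
    det_vandermonde_fin_add_two X, det_vandermonde_fin_add_two Y, Function.comp_apply,
    Fin.prod_univ_succ, Fin.one_succAbove_zero, Fin.one_succAbove_succ, Fin.succ_zero_eq_one,
    Finset.prod_mul_distrib, mul_ne_zero_iff] at h₀ h₂ h₀₀ h₁₁ h₀₁ h₁₀ hX hY
  obtain ⟨⟨-, hX₀⟩, hX₁, hX₂⟩ := hX
  obtain ⟨⟨-, hY₀⟩, hY₁, hY₂⟩ := hY
  refine mul_right_cancel₀ (b := s ^ (2 * n ^ 2 + 4 * n + 2) *
    ((∏ i : Fin n, (X i.succ.succ - X 0)) * (∏ i : Fin n, (X i.succ.succ - X 1)) *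
      (∏ i : Fin n, (Y i.succ.succ - Y 0)) * (∏ i : Fin n, (Y i.succ.succ - Y 1))) *
    ((Matrix.vandermonde (X ∘ Fin.succ ∘ Fin.succ)).det *
      (Matrix.vandermonde (Y ∘ Fin.succ ∘ Fin.succ)).det) ^ 2)
    (by simp only [ne_eq, mul_eq_zero, pow_eq_zero_iff', hs, hX₀, hX₁, hX₂, hY₀, hY₁, hY₂]; simp) ?_
  have p₂₀ := congrArg₂ (· * ·) h₂ h₀
  have p₀₁ := congrArg₂ (· * ·) h₀₀ h₁₁
  have p₁₀ := congrArg₂ (· * ·) h₀₁ h₁₀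
  simp only [Function.comp_assoc] at p₂₀ p₀₁ p₁₀
  linear_combination p₂₀ - abWeight s (X 0 * Y 1) * abWeight s (X 1 * Y 0) * p₀₁ +
    abWeight s (X 0 * Y 0) * abWeight s (X 1 * Y 1) * p₁₀ + (s * (s ^ 2 - 1)) ^ (2 * n + 2) *
    (∏ i : Fin n, ∏ j : Fin n, abWeight s (X i.succ.succ * Y j.succ.succ)) ^ 2 *
    (∏ i : Fin n, abWeight s (X i.succ.succ * Y 0)) *
    (∏ i : Fin n, abWeight s (X i.succ.succ * Y 1)) *
    (∏ j : Fin n, abWeight s (X 0 * Y j.succ.succ)) *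
    (∏ j : Fin n, abWeight s (X 1 * Y j.succ.succ)) *
    abWeight s (X 0 * Y 0) * abWeight s (X 0 * Y 1) * abWeight s (X 1 * Y 0) *
    abWeight s (X 1 * Y 1) * dj

theorem partitionFunction_desnanotJacobi {R : Type*} [CommRing R] (s : R) (X Y : Fin (n + 2) → R) :
    s ^ 2 * (X 1 - X 0) * (Y 1 - Y 0) * partitionFunction s X Y *
        partitionFunction s (X ∘ Fin.succ ∘ Fin.succ) (Y ∘ Fin.succ ∘ Fin.succ) =
      abWeight s (X 0 * Y 1) * abWeight s (X 1 * Y 0) *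
          partitionFunction s (X ∘ Fin.succAbove 1) (Y ∘ Fin.succAbove 1) *
          partitionFunction s (X ∘ Fin.succ) (Y ∘ Fin.succ) -
        abWeight s (X 0 * Y 0) * abWeight s (X 1 * Y 1) *
          partitionFunction s (X ∘ Fin.succAbove 1) (Y ∘ Fin.succ) *
          partitionFunction s (X ∘ Fin.succ) (Y ∘ Fin.succAbove 1) := by
  obtain ⟨P, K, _, _, φ, ι, s, X, Y, rfl, rfl, rfl, hι, h⟩ := exists_generic_lift s X Y
  have hK := partitionFunction_desnanotJacobi_of_isGeneric h
  simp only [Function.comp_assoc, Function.comp_apply, partitionFunction_map, abWeight_map,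
    ← map_mul, ← map_sub, ← map_pow] at hK ⊢
  exact congrArg φ (hι hK)

end DesnanotJacobi

/-! ### Alternating sign matrices as lattice configurations -/

section AlternatingSignMatrices

variable {n : ℕ}

theorem sum_filter_castSucc_lt_succ {M : Type*} [AddCommMonoid M] (a : Fin n → M) (i : Fin n) :
    ∑ j : Fin n with j.castSucc < i.succ, a j =
      a i + ∑ j : Fin n with j.castSucc < i.castSucc, a j := by
  have hfilter : ({j | j.castSucc < i.succ} : Finset (Fin n)) =
      insert i ({j | j.castSucc < i.castSucc} : Finset (Fin n)) := by
    ext j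
    simp [le_iff_eq_or_lt]
  rw [hfilter, Finset.sum_insert (by simp)]

theorem sum_filter_castSucc_lt_sub (g : Fin (n + 1) → ℤ) (k : Fin (n + 1)) :
    ∑ j : Fin n with j.castSucc < k, (g j.succ - g j.castSucc) = g k - g 0 := by
  induction k using Fin.induction with
  | zero => simp
  | succ i ih =>
    rw [sum_filter_castSucc_lt_succ, ih]
    ring

/-- The configuration `(h, v)` records the partial row sums and the partial column sums of `A`. -/
structure Encodes (A : Fin n → Fin n → ℤ) (h : Fin n → Fin (n + 1) → Bool)
    (v : Fin (n + 1) → Fin n → Bool) : Prop extends IsDomainWall h v where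
  row : ∀ i j, A i j = (h i j.succ).toNat - (h i j.castSucc).toNat
  col : ∀ i j, A i j = (v i.succ j).toNat - (v i.castSucc j).toNat

namespace Encodes

variable {A : Fin n → Fin n → ℤ} {h h' : Fin n → Fin (n + 1) → Bool}
  {v v' : Fin (n + 1) → Fin n → Bool}

theorem transpose (H : Encodes A h v) :
    Encodes (fun i j => A j i) (fun i k => v k i) (fun k j => h j k) :=
  ⟨H.toIsDomainWall.transpose, fun i j => H.col j i, fun i j => H.row j i⟩

theorem isIce (H : Encodes A h v) : IsIce h v := fun i j => by
  have hrow := H.row i j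
  have hcol := H.col i j
  omega

theorem row_sum (H : Encodes A h v) (i : Fin n) (k : Fin (n + 1)) :
    ∑ j : Fin n with j.castSucc < k, A i j = (h i k).toNat := by
  simp only [H.row]
  rw [sum_filter_castSucc_lt_sub (fun k => ((h i k).toNat : ℤ)), H.left]
  simp

theorem row_sum_eq_zero_or_one (H : Encodes A h v) (i j : Fin n) :
    ∑ j' with j' ≤ j, A i j' = 0 ∨ ∑ j' with j' ≤ j, A i j' = 1 := by
  have hsum := H.row_sum i j.succ
  simp only [Fin.castSucc_lt_succ_iff] at hsum
  rw [hsum]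
  cases h i j.succ <;> simp

theorem row_sum_eq_one (H : Encodes A h v) (i : Fin n) : ∑ j, A i j = 1 := by
  simpa [Fin.castSucc_lt_last, H.right] using H.row_sum i (Fin.last n)

theorem isASM (H : Encodes A h v) : IsASM A := by
  refine ⟨fun i j => ?_, H.row_sum_eq_zero_or_one,
    fun i j => H.transpose.row_sum_eq_zero_or_one j i, H.row_sum_eq_one,
    H.transpose.row_sum_eq_one⟩
  rw [H.row]
  cases h i j.succ <;> cases h i j.castSucc <;> simp

theorem left_unique (H : Encodes A h v) (H' : Encodes A h' v') : h = h' := by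
  funext i k
  have hsum := (H.row_sum i k).symm.trans (H'.row_sum i k)
  revert hsum
  cases h i k <;> cases h' i k <;> simp

theorem unique (H : Encodes A h v) (H' : Encodes A h' v') : h = h' ∧ v = v' :=
  ⟨H.left_unique H',
    funext fun k => funext fun j => congrFun₂ (H.transpose.left_unique H'.transpose) j k⟩

end Encodes

theorem exists_partialSums (a : Fin n → ℤ)
    (ha : ∀ j, ∑ j' with j' ≤ j, a j' = 0 ∨ ∑ j' with j' ≤ j, a j' = 1) (hs : ∑ j, a j = 1) :
    ∃ g : Fin (n + 1) → Bool, g 0 = false ∧ g (Fin.last n) = true ∧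
      ∀ j, a j = (g j.succ).toNat - (g j.castSucc).toNat := by
  set s : Fin (n + 1) → ℤ := fun k => ∑ j : Fin n with j.castSucc < k, a j
  have hs01 : ∀ k, ((decide (s k = 1)).toNat : ℤ) = s k := fun k => by
    have : s k = 0 ∨ s k = 1 := by
      cases k using Fin.cases with
      | zero => simp [s]
      | succ j => simpa [s] using ha j
    rcases this with h | h <;> simp [h]
  refine ⟨fun k => decide (s k = 1), by simp [s], by simpa [s, Fin.castSucc_lt_last] using hs,
    fun j => ?_⟩
  rw [hs01, hs01, eq_sub_iff_add_eq]
  exact (sum_filter_castSucc_lt_succ a j).symm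

theorem IsASM.exists_encodes {A : Fin n → Fin n → ℤ} (hA : IsASM A) : ∃ h v, Encodes A h v := by
  obtain ⟨-, hrow, hcol, hrow_one, hcol_one⟩ := hA
  choose h h0 h1 hAh using fun i => exists_partialSums (A i) (hrow i) (hrow_one i)
  choose v v0 v1 hAv using fun j =>
    exists_partialSums (fun i => A i j) (fun i => hcol i j) (hcol_one j)
  exact ⟨h, fun k j => v j k, ⟨h0, h1, v0, v1⟩, hAh, fun i j => hAv j i⟩

theorem eq_zero_and_exists_gt_iff {B : Fin n → ℤ} {g : Fin (n + 1) → Bool} (hmono : Monotone g)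
    (hlast : g (Fin.last n) = true) (hB : ∀ j, B j = (g j.succ).toNat - (g j.castSucc).toNat)
    (j : Fin n) : (B j = 0 ∧ ∃ j', j < j' ∧ B j' = 1) ↔ g j.succ = false := by
  constructor
  · rintro ⟨-, j', hj, h⟩
    rw [hB] at h
    have hle : g j.succ ≤ g j'.castSucc := hmono (Fin.succ_le_castSucc_iff.2 hj)
    revert h hle
    cases g j.succ <;> cases g j'.castSucc <;> cases g j'.succ <;> simp
  · intro h
    have hle : g j.castSucc ≤ g j.succ := hmono j.castSucc_le_succ
    obtain ⟨j', hj', -, hcast, hsucc⟩ := exists_jump_of_le (Fin.le_last j.succ) h hlast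
    refine ⟨?_, j', Fin.succ_le_castSucc_iff.1 hj', by simp [hB, hcast, hsucc]⟩
    have hcast : g j.castSucc = false := le_bot_iff.1 (hle.trans_eq h)
    simp [hB, h, hcast]

theorem eq_zero_and_exists_lt_iff {B : Fin n → ℤ} {g : Fin (n + 1) → Bool} (hmono : Monotone g)
    (hzero : g 0 = false) (hB : ∀ j, B j = (g j.succ).toNat - (g j.castSucc).toNat) (j : Fin n) :
    (B j = 0 ∧ ∃ j' < j, B j' = 1) ↔ g j.castSucc = true := by
  constructor
  · rintro ⟨-, j', hj, h⟩
    rw [hB] at h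
    have hle : g j'.succ ≤ g j.castSucc := hmono (Fin.succ_le_castSucc_iff.2 hj)
    revert h hle
    cases g j.castSucc <;> cases g j'.castSucc <;> cases g j'.succ <;> simp
  · intro h
    have hle : g j.castSucc ≤ g j.succ := hmono j.castSucc_le_succ
    obtain ⟨j', -, hj', hcast, hsucc⟩ := exists_jump_of_le (Fin.zero_le j.castSucc) hzero h
    refine ⟨?_, j', Fin.succ_le_castSucc_iff.1 hj', by simp [hB, hcast, hsucc]⟩
    have hsucc : g j.succ = true := top_le_iff.1 (h.symm.trans_le hle)
    simp [hB, h, hsucc]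

section Statistics

variable {A : Fin (n + 1) → Fin (n + 1) → ℤ} {h : Fin (n + 1) → Fin (n + 2) → Bool}
  {v : Fin (n + 2) → Fin (n + 1) → Bool}

theorem bool_le_of_ice {l u r d : Bool} (hice : r.toNat + u.toNat = l.toNat + d.toNat)
    (hud : u = false ∨ d = true) : l ≤ r := by
  revert l u r d
  decide

namespace Encodes

theorem nuASM_eq (H : Encodes A h v) :
    nuASM A = #{p : Fin (n + 1) × Fin (n + 1) |
      v p.1.castSucc p.2 = true ∧ h p.1 p.2.succ = true} := by
  have key : (∑ i, ∑ i', ∑ j, ∑ j', if i < i' ∧ j' ≤ j then A i j * A i' j' else 0) =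
      ∑ i', ∑ j, ((v i'.castSucc j).toNat : ℤ) * (h i' j.succ).toNat := by
    rw [Finset.sum_comm]
    refine Finset.sum_congr rfl fun i' _ => ?_
    rw [Finset.sum_comm]
    refine Finset.sum_congr rfl fun j _ => ?_
    rw [← H.row_sum, ← H.transpose.row_sum, Finset.sum_filter, Finset.sum_filter,
      Finset.sum_mul_sum]
    refine Finset.sum_congr rfl fun i _ => Finset.sum_congr rfl fun j' _ => ?_
    by_cases hi : i < i' <;> by_cases hj : j' ≤ j <;> simp [hi, hj]
  rw [nuASM, key, Finset.card_filter, Fintype.sum_prod_type, ← Int.toNat_natCast (∑ i, ∑ j, _)]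
  congr 1
  push_cast
  refine Finset.sum_congr rfl fun i _ => Finset.sum_congr rfl fun j _ => ?_
  cases v i.castSucc j <;> cases h i j.succ <;> simp

theorem muASM_eq (H : Encodes A h v) :
    muASM A = #{p : Fin (n + 1) × Fin (n + 1) |
      h p.1 p.2.castSucc = true ∧ h p.1 p.2.succ = false} := by
  refine congrArg Finset.card (Finset.filter_congr fun p _ => ?_)
  rw [H.row]
  cases h p.1 p.2.castSucc <;> cases h p.1 p.2.succ <;> simp

theorem rhoT_eq (H : Encodes A h v) : rhoT A = #{j : Fin (n + 1) | h 0 j.succ = false} := by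
  refine congrArg Finset.card (Finset.filter_congr fun j _ => ?_)
  exact eq_zero_and_exists_gt_iff
    (Fin.monotone_iff_le_succ.2 fun k => bool_le_of_ice (H.isIce 0 k) (.inl (H.top k)))
    (H.right 0) (H.row 0) j

theorem rhoB_eq (H : Encodes A h v) :
    rhoB A = #{j : Fin (n + 1) | h (Fin.last n) j.castSucc = true} := by
  refine congrArg Finset.card (Finset.filter_congr fun j _ => ?_)
  exact eq_zero_and_exists_lt_iff
    (Fin.monotone_iff_le_succ.2 fun k =>
      bool_le_of_ice (H.isIce (Fin.last n) k) (.inr (H.bottom k)))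
    (H.left (Fin.last n)) (H.row (Fin.last n)) j

theorem rhoL_eq (H : Encodes A h v) :
    rhoL A = #{i : Fin (n + 1) | v i.succ 0 = false} :=
  H.transpose.rhoT_eq

theorem rhoR_eq (H : Encodes A h v) :
    rhoR A = #{i : Fin (n + 1) | v i.castSucc (Fin.last n) = true} :=
  H.transpose.rhoB_eq

end Encodes

variable {R : Type*} [CommRing R]

/-- Vertex weights whose lattice sum is `Zqua`. -/
def quaWeight (x y z1 z2 z3 z4 : R) (i j : Fin (n + 1)) : VertexWeights R where
  a₁ := (if i = 0 then z1 else 1) * if j = 0 then z4 else 1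
  a₂ := x * ((if j = Fin.last n then z2 else 1) * if i = Fin.last n then z3 else 1)
  b₁ := 1
  b₂ := 1
  c₁ := 1
  c₂ := y

theorem weight_quaWeight (x y z1 z2 z3 z4 : R) (hb : IsDomainWall h v) (hice : IsIce h v)
    (i j : Fin (n + 1)) :
    (quaWeight x y z1 z2 z3 z4 i j).weight
        (h i j.castSucc) (v i.castSucc j) (h i j.succ) (v i.succ j) =
      (if v i.castSucc j = true ∧ h i j.succ = true then x else 1) *
      (if h i j.castSucc = true ∧ h i j.succ = false then y else 1) *
      (if i = 0 ∧ h i j.succ = false then z1 else 1) *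
      (if j = Fin.last n ∧ v i.castSucc j = true then z2 else 1) *
      (if i = Fin.last n ∧ h i j.castSucc = true then z3 else 1) *
      (if j = 0 ∧ v i.succ j = false then z4 else 1) := by
  have left : j = 0 → h i j.castSucc = false := by rintro rfl; exact hb.left i
  have right : j = Fin.last n → h i j.succ = true := by rintro rfl; exact hb.right i
  have top : i = 0 → v i.castSucc j = false := by rintro rfl; exact hb.top j
  have bottom : i = Fin.last n → v i.succ j = true := by rintro rfl; exact hb.bottom j
  have ice := hice i j
  revert left right top bottom ice
  cases h i j.castSucc <;> cases v i.castSucc j <;> cases h i j.succ <;> cases v i.succ j <;>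
    simp +contextual [VertexWeights.weight, quaWeight, mul_assoc]

theorem prod_prod_ite_eq_pow_card {M : Type*} [CommMonoid M] (z : M) (p : Fin n → Fin n → Prop)
    [∀ i j, Decidable (p i j)] :
    ∏ i, ∏ j, (if p i j then z else 1) = z ^ #{q : Fin n × Fin n | p q.1 q.2} := by
  rw [← Fintype.prod_prod_type', Finset.prod_ite, Finset.prod_const, Finset.prod_const_one, mul_one]

theorem prod_prod_ite_and_eq_pow_card {M : Type*} [CommMonoid M] (z : M) (c : Fin n)
    (p : Fin n → Fin n → Prop) [∀ i j, Decidable (p i j)] :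
    ∏ i, ∏ j, (if i = c ∧ p i j then z else 1) = z ^ #{j | p c j} := by
  rw [Finset.prod_eq_single c (fun i _ hi => by simp [hi]) (by simp)]
  simp [Finset.prod_ite]

theorem Encodes.prod_pow_eq_configWeight (x y z1 z2 z3 z4 : R) (H : Encodes A h v) :
    x ^ nuASM A * y ^ muASM A * z1 ^ rhoT A * z2 ^ rhoR A * z3 ^ rhoB A * z4 ^ rhoL A =
      configWeight (quaWeight x y z1 z2 z3 z4) h v := by
  have hright := prod_prod_ite_and_eq_pow_card z2 (Fin.last n) fun j i => v i.castSucc j = true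
  have hleft := prod_prod_ite_and_eq_pow_card z4 0 fun j i => v i.succ j = false
  rw [Finset.prod_comm] at hright hleft
  simp only [configWeight, weight_quaWeight _ _ _ _ _ _ H.toIsDomainWall H.isIce,
    Finset.prod_mul_distrib, hright, hleft]
  rw [H.nuASM_eq, H.muASM_eq, H.rhoT_eq, H.rhoR_eq, H.rhoB_eq, H.rhoL_eq,
    prod_prod_ite_eq_pow_card, prod_prod_ite_eq_pow_card, prod_prod_ite_and_eq_pow_card,
    prod_prod_ite_and_eq_pow_card]

/-- The code of the alternating sign matrix whose partial row sums are recorded in `h`. -/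
def asmOfConfig (h : Fin n → Fin (n + 1) → Bool) (i j : Fin n) : Fin 3 :=
  if h i j.succ = h i j.castSucc then 1 else if h i j.succ then 2 else 0

theorem encodes_asmOfConfig {h : Fin n → Fin (n + 1) → Bool} {v : Fin (n + 1) → Fin n → Bool}
    (hb : IsDomainWall h v) (hice : IsIce h v) : Encodes (asmMat (asmOfConfig h)) h v := by
  have row : ∀ i j, asmMat (asmOfConfig h) i j = (h i j.succ).toNat - (h i j.castSucc).toNat := by
    intro i j
    simp only [asmMat, asmOfConfig]
    cases h i j.succ <;> cases h i j.castSucc <;> rfl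
  refine ⟨hb, row, fun i j => ?_⟩
  have := hice i j
  rw [row]
  omega

theorem asmMat_injective : Function.Injective (asmMat (n := n)) := by
  refine fun e e' heq => funext fun i => funext fun j => Fin.ext ?_
  have := congrFun₂ heq i j
  simp only [asmMat] at this
  omega

theorem Zqua_eq_latticeSum (x y z1 z2 z3 z4 : R) :
    Zqua (n + 1) x y z1 z2 z3 z4 = latticeSum (quaWeight (n := n) x y z1 z2 z3 z4) := by
  classical
  set ω := quaWeight (n := n) x y z1 z2 z3 z4
  rw [Zqua, latticeSum, ← Fintype.sum_prod_type', ← Finset.sum_filter, ← Finset.sum_filter,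
    ← Finset.sum_filter_of_ne (p := fun p => IsIce p.1 p.2)
      fun (p : (Fin (n + 1) → Fin (n + 2) → Bool) × (Fin (n + 2) → Fin (n + 1) → Bool)) _
        (hne : configWeight ω p.1 p.2 ≠ 0) => isIce_of_configWeight_ne_zero hne,
    Finset.filter_filter]
  have encodes : ∀ p ∈ ({p | IsDomainWall p.1 p.2 ∧ IsIce p.1 p.2} : Finset
      ((Fin (n + 1) → Fin (n + 2) → Bool) × (Fin (n + 2) → Fin (n + 1) → Bool))),
      Encodes (asmMat (asmOfConfig p.1)) p.1 p.2 := fun p hp =>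
    have hp := (Finset.mem_filter.1 hp).2
    encodes_asmOfConfig hp.1 hp.2
  refine (Finset.sum_nbij (fun p => asmOfConfig p.1) (fun p hp => ?_) (fun p hp q hq heq => ?_)
    (fun e he => ?_) fun p hp => ?_).symm
  · exact Finset.mem_filter.2 ⟨Finset.mem_univ _, (encodes p hp).isASM⟩
  · have hq := encodes q hq
    rw [← show asmOfConfig p.1 = asmOfConfig q.1 from heq] at hq
    obtain ⟨hh, hv⟩ := (encodes p hp).unique hq
    exact Prod.ext hh hv
  · obtain ⟨h, v, H⟩ := (Finset.mem_filter.1 he).2.exists_encodes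
    refine ⟨(h, v), Finset.mem_filter.2 ⟨Finset.mem_univ _, H.toIsDomainWall, H.isIce⟩,
      asmMat_injective (funext fun i => funext fun j => ?_)⟩
    rw [(encodes_asmOfConfig H.toIsDomainWall H.isIce).row, H.row]
  · exact ((encodes p hp).prod_pow_eq_configWeight x y z1 z2 z3 z4).symm

theorem Zqua_map {S : Type*} [CommRing S] (φ : R →+* S) (x y z1 z2 z3 z4 : R) :
    Zqua n (φ x) (φ y) (φ z1) (φ z2) (φ z3) (φ z4) = φ (Zqua n x y z1 z2 z3 z4) := by
  simp only [Zqua, map_sum, apply_ite φ, map_mul, map_pow, map_zero]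

end Statistics

end AlternatingSignMatrices

/-! ### Gauge transformations -/

section Gauge

namespace Encodes

variable {n : ℕ} {A : Fin n → Fin n → ℤ} {h : Fin n → Fin (n + 1) → Bool}
  {v : Fin (n + 1) → Fin n → Bool}

theorem sum_toNat (H : Encodes A h v) (k : Fin (n + 1)) : ∑ i, ((h i k).toNat : ℤ) = k := by
  simp only [← H.row_sum]
  rw [Finset.sum_comm, Finset.sum_congr rfl fun j _ => H.transpose.row_sum_eq_one j]
  simp [Fin.lt_def, Fin.card_filter_val_lt, Nat.lt_succ_iff.1 k.isLt]

theorem sum_one_sub_toNat_sub_toNat (H : Encodes A h v) :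
    ∑ i, ∑ j, (1 - ((h i j.succ).toNat : ℤ) - (v i.castSucc j).toNat) = 0 := by
  have hrev : ∑ i : Fin n, ((n : ℤ) - (i + 1)) = ∑ i : Fin n, (i : ℤ) := by
    rw [← Equiv.sum_comp Fin.revPerm fun i : Fin n => (i : ℤ)]
    exact Finset.sum_congr rfl fun i _ => by rw [Fin.revPerm_apply, Fin.val_rev]; omega
  simp only [Finset.sum_sub_distrib] at hrev ⊢
  rw [Finset.sum_comm (f := fun i j => ((h i (Fin.succ j)).toNat : ℤ))]
  simp only [H.sum_toNat, H.transpose.sum_toNat, Fin.val_succ, Fin.val_castSucc, ← hrev]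
  simp

end Encodes

variable {K : Type*} [Field K] {n : ℕ}

/-- The gauge transformation with parameters `γ`, `f` and `g`. It multiplies a lattice sum by a
factor that depends only on the boundary conditions. -/
def VertexWeights.gauge (γ f g : K) (w : VertexWeights K) : VertexWeights K :=
  ⟨γ * w.a₁, γ⁻¹ * w.a₂, w.b₁, w.b₂, f * g * w.c₁, (f * g)⁻¹ * w.c₂⟩

theorem VertexWeights.weight_gauge (γ f g : K) (w : VertexWeights K) (l u r d : Bool) :
    (w.gauge γ f g).weight l u r d = γ ^ (1 - (r.toNat : ℤ) - u.toNat) *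
      (f ^ ((r.toNat : ℤ) - l.toNat) * g ^ ((d.toNat : ℤ) - u.toNat)) * w.weight l u r d := by
  cases l <;> cases u <;> cases r <;> cases d <;> simp [weight, gauge, mul_comm]

theorem prod_zpow_eq_zpow_sum₀ {ι G : Type*} [CommGroupWithZero G] {a : G} (ha : a ≠ 0)
    (s : Finset ι) (e : ι → ℤ) : ∏ i ∈ s, a ^ e i = a ^ ∑ i ∈ s, e i := by
  classical
  induction s using Finset.induction_on with
  | empty => simp
  | insert i s hi ih => rw [Finset.prod_insert hi, Finset.sum_insert hi, ih, zpow_add₀ ha]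

theorem Encodes.configWeight_gauge {A : Fin n → Fin n → ℤ} {h : Fin n → Fin (n + 1) → Bool}
    {v : Fin (n + 1) → Fin n → Bool} (H : Encodes A h v) {γ : K} {f g : Fin n → K} (hγ : γ ≠ 0)
    (hf : ∀ i, f i ≠ 0) (hg : ∀ j, g j ≠ 0) (ω : Fin n → Fin n → VertexWeights K) :
    configWeight (fun i j => (ω i j).gauge γ (f i) (g j)) h v =
      (∏ i, f i) * (∏ j, g j) * configWeight ω h v := by
  simp only [configWeight, VertexWeights.weight_gauge, ← H.row, ← H.col, Finset.prod_mul_distrib]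
  rw [Finset.prod_comm (f := fun i j => g j ^ A i j)]
  simp only [prod_zpow_eq_zpow_sum₀ hγ, prod_zpow_eq_zpow_sum₀ (hf _),
    prod_zpow_eq_zpow_sum₀ (hg _), H.row_sum_eq_one, H.transpose.row_sum_eq_one,
    H.sum_one_sub_toNat_sub_toNat, zpow_one, zpow_zero, one_mul]

theorem latticeSum_gauge {γ : K} {f g : Fin n → K} (hγ : γ ≠ 0) (hf : ∀ i, f i ≠ 0)
    (hg : ∀ j, g j ≠ 0) (ω : Fin n → Fin n → VertexWeights K) :
    latticeSum (fun i j => (ω i j).gauge γ (f i) (g j)) =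
      (∏ i, f i) * (∏ j, g j) * latticeSum ω := by
  simp only [latticeSum, Finset.mul_sum, mul_ite, mul_zero]
  refine Finset.sum_congr rfl fun h _ => Finset.sum_congr rfl fun v _ => ?_
  split_ifs with hb
  · by_cases hice : IsIce h v
    · exact (encodes_asmOfConfig hb hice).configWeight_gauge hγ hf hg ω
    · simp only [configWeight_eq_zero_of_not_isIce _ hice, mul_zero]
  · rfl

end Gauge

/-! ### Boundary-refined weights -/

section BoundaryWeights

variable {n : ℕ}

theorem latticeSum_congr_weights {R : Type*} [CommSemiring R]
    {ω ω' : Fin (n + 1) → Fin (n + 1) → VertexWeights R}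
    (a₁ : ∀ i j, i ≠ Fin.last n → j ≠ Fin.last n → (ω i j).a₁ = (ω' i j).a₁)
    (a₂ : ∀ i j, i ≠ 0 → j ≠ 0 → (ω i j).a₂ = (ω' i j).a₂)
    (b₁ : ∀ i j, i ≠ 0 → j ≠ Fin.last n → (ω i j).b₁ = (ω' i j).b₁)
    (b₂ : ∀ i j, i ≠ Fin.last n → j ≠ 0 → (ω i j).b₂ = (ω' i j).b₂)
    (c₁ : ∀ i j, (ω i j).c₁ = (ω' i j).c₁)
    (c₂ : ∀ i j, i ≠ 0 → i ≠ Fin.last n → j ≠ 0 → j ≠ Fin.last n → (ω i j).c₂ = (ω' i j).c₂) :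
    latticeSum ω = latticeSum ω' := by
  refine latticeSum_congr fun h v hb _ =>
    Finset.prod_congr rfl fun i _ => Finset.prod_congr rfl fun j _ => ?_
  have left : h i j.castSucc = true → j ≠ 0 := by rintro hl rfl; simp [hb.left] at hl
  have right : h i j.succ = false → j ≠ Fin.last n := by rintro hr rfl; simp [hb.right] at hr
  have top : v i.castSucc j = true → i ≠ 0 := by rintro ht rfl; simp [hb.top] at ht
  have bottom : v i.succ j = false → i ≠ Fin.last n := by rintro hd rfl; simp [hb.bottom] at hd
  revert left right top bottom
  cases h i j.castSucc <;> cases v i.castSucc j <;> cases h i j.succ <;> cases v i.succ j <;>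
    simp +contextual [VertexWeights.weight, a₁, a₂, b₁, b₂, c₁, c₂]

theorem Zqua_rotate {K : Type*} [Field K] {x : K} (hx : x ≠ 0) (y z1 z2 z3 z4 : K) :
    Zqua (n + 1) x y z1 z2 z3 z4 = Zqua (n + 1) x y z3 z4 z1 z2 := by
  have hgauge := latticeSum_gauge (f := 1) (g := 1) hx (fun _ => one_ne_zero)
    (fun _ => one_ne_zero) (quaWeight (n := n) x y z3 z4 z1 z2)
  rw [Zqua_eq_latticeSum, Zqua_eq_latticeSum, ← latticeSum_transpose, ← latticeSum_flip,
    ← latticeSum_transpose, ← latticeSum_flip]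
  simp only [Pi.one_apply, Finset.prod_const_one, one_mul] at hgauge
  rw [← hgauge]
  congr 1
  ext i j <;>
    simp [quaWeight, VertexWeights.gauge, VertexWeights.flip, VertexWeights.transpose,
      Fin.rev_eq_iff, mul_comm, hx]

end BoundaryWeights

section TriWeight

variable {R : Type*} [CommRing R] {n : ℕ}

/-- The vertex weights of `Ztri`, except that a vertex of type `a₁` in the top left corner has an
extra factor `k1`, and a vertex of type `b₁` in the bottom left corner an extra factor `k2`. -/
def triWeight (x y z1 z2 z3 k1 k2 : R) (i j : Fin (n + 1)) : VertexWeights R where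
  a₁ := (if i = 0 then z1 else 1) * (if j = 0 then z3 else 1) * if i = 0 ∧ j = 0 then k1 else 1
  a₂ := x * if i = Fin.last n then z2 else 1
  b₁ := if i = Fin.last n ∧ j = 0 then k2 else 1
  b₂ := 1
  c₁ := 1
  c₂ := y

variable (n)

/-- The lattice sum of size `n + 1` with the weights `triWeight`. -/
noncomputable def triSum (x y z1 z2 z3 k1 k2 : R) : R :=
  latticeSum (triWeight (n := n) x y z1 z2 z3 k1 k2)

variable {n}

theorem triSum_one_one (x y z1 z2 z3 : R) :
    triSum n x y z1 z2 z3 1 1 = Zqua (n + 1) x y z1 1 z2 z3 := by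
  rw [Zqua_eq_latticeSum, triSum]
  congr 1
  ext i j <;> simp [quaWeight, triWeight]

theorem triSum_eq_add_top (x y z1 z2 z3 k1 k2 : R) :
    triSum (n + 1) x y z1 z2 z3 k1 k2 =
      k1 * triSum (n + 1) x y z1 z2 z3 1 k2 + (1 - k1) * triSum (n + 1) x y z1 z2 z3 0 k2 := by
  refine latticeSum_eq_add_of_vertex 0 0 k1 (1 - k1) (fun l u r d => ?_) (fun i j hij => ?_)
    fun i j hij => ?_
  · cases l <;> cases u <;> cases r <;> cases d <;>
      simp only [triWeight, VertexWeights.weight, and_self, if_true] <;> ring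
  all_goals
    rw [Ne, Prod.mk_inj] at hij
    simp only [triWeight, if_neg hij]

theorem triSum_eq_add_bottom (x y z1 z2 z3 k1 k2 : R) :
    triSum (n + 1) x y z1 z2 z3 k1 k2 =
      k2 * triSum (n + 1) x y z1 z2 z3 k1 1 + (1 - k2) * triSum (n + 1) x y z1 z2 z3 k1 0 := by
  refine latticeSum_eq_add_of_vertex (Fin.last _) 0 k2 (1 - k2) (fun l u r d => ?_)
    (fun i j hij => ?_) fun i j hij => ?_
  · cases l <;> cases u <;> cases r <;> cases d <;>
      simp only [triWeight, VertexWeights.weight, and_self, if_true] <;> ring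
  all_goals
    rw [Ne, Prod.mk_inj] at hij
    simp only [triWeight, if_neg hij]

theorem triSum_zero_top (x y z1 z2 z3 k2 : R) :
    triSum (n + 1) x y z1 z2 z3 0 k2 = k2 * Zqua (n + 1) x y 1 1 z2 1 := by
  rw [triSum, latticeSum_eq_of_corner _ (by simp [triWeight]), Zqua_eq_latticeSum]
  congr 1
  · simp [triWeight, ← Fin.succ_last]
  · congr 1
    ext i j <;> simp [triWeight, quaWeight, ← Fin.succ_last]

theorem triSum_zero_bottom (x y z1 z2 z3 : R) :
    triSum (n + 1) x y z1 z2 z3 1 0 =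
      z1 * (x * z2 * z3) ^ (n + 1) * Zqua (n + 1) x y z1 1 1 1 := by
  rw [triSum, ← latticeSum_flip, latticeSum_eq_of_corner, Zqua_eq_latticeSum,
    ← latticeSum_flip (quaWeight x y z1 1 1 1)]
  · congr 1
    · simp only [VertexWeights.flip, triWeight, Fin.rev_zero, ← Fin.succ_last, Fin.succ_ne_zero,
        if_true, if_false, one_mul, and_true, mul_one, and_self, and_false,
        Fin.prod_univ_castSucc (n := n), prod_const, card_univ, Fintype.card_fin, Fin.rev_eq_iff,
        Fin.succ_inj, ite_mul, ite_self, mul_ite, Fin.castSucc_ne_last]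
      ring
    · refine latticeSum_congr_weights ?_ ?_ ?_ ?_ ?_ ?_ <;>
        simp +contextual [triWeight, quaWeight, VertexWeights.flip, Fin.rev_eq_iff]
  · simp [triWeight, VertexWeights.flip]

theorem triSum_eq (x y z1 z2 z3 k1 k2 : R) :
    triSum (n + 1) x y z1 z2 z3 k1 k2 =
      k1 * k2 * Zqua (n + 2) x y z1 1 z2 z3 + k2 * (1 - k1) * Zqua (n + 1) x y 1 1 z2 1 +
        k1 * (1 - k2) * (z1 * (x * z2 * z3) ^ (n + 1) * Zqua (n + 1) x y z1 1 1 1) := by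
  rw [triSum_eq_add_top, triSum_zero_top, triSum_eq_add_bottom, triSum_one_one, triSum_zero_bottom]
  ring

end TriWeight

/-! ### The parametrization of the refined weights -/

section Normalization

variable {K : Type*} [Field K] {n : ℕ}

theorem partitionFunction_eq_normalized {s α : K} {β η : Fin (n + 1) → K} (hs : s ^ 2 - 1 ≠ 0)
    (hα : α ≠ 0) (hβ : ∀ i, β i ≠ 0) (hη : ∀ j, η j ≠ 0) (X Y : Fin (n + 1) → K) :
    partitionFunction s X Y = (s ^ 2 - 1) ^ (n + 1) * ((∏ i, β i) * ∏ j, η j) ^ n *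
      latticeSum fun i j =>
        { a₁ := (s ^ 2 * (X i * Y j) - 1) / (β i * η j * α)
          a₂ := (s ^ 2 * (X i * Y j) - 1) * α / (β i * η j)
          b₁ := s * (X i * Y j - 1) / (β i * η j)
          b₂ := s * (X i * Y j - 1) / (β i * η j)
          c₁ := 1
          c₂ := (s ^ 2 - 1) ^ 2 * (X i * Y j) / (β i * η j) ^ 2 } := by
  have hgauge := latticeSum_gauge (inv_ne_zero hα) (fun i => div_ne_zero (hβ i) hs) hη fun i j =>
    (sixVertex s (X i * Y j)).map ((β i * η j)⁻¹ * ·)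
  rw [latticeSum_mul, ← partitionFunction] at hgauge
  have hω : ∀ i j, ((sixVertex s (X i * Y j)).map ((β i * η j)⁻¹ * ·)).gauge α⁻¹
      (β i / (s ^ 2 - 1)) (η j) =
        { a₁ := (s ^ 2 * (X i * Y j) - 1) / (β i * η j * α)
          a₂ := (s ^ 2 * (X i * Y j) - 1) * α / (β i * η j)
          b₁ := s * (X i * Y j - 1) / (β i * η j)
          b₂ := s * (X i * Y j - 1) / (β i * η j)
          c₁ := 1
          c₂ := (s ^ 2 - 1) ^ 2 * (X i * Y j) / (β i * η j) ^ 2 } := by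
    intro i j
    have := hβ i
    have := hη j
    ext <;> simp only [sixVertex, VertexWeights.map, VertexWeights.gauge] <;> field_simp
  simp only [hω] at hgauge
  rw [hgauge]
  simp only [Finset.prod_inv_distrib, Finset.prod_mul_distrib, Finset.prod_div_distrib,
    Finset.prod_const, Finset.card_univ, Fintype.card_fin, Finset.prod_pow]
  have hβ' : ∏ i, β i ≠ 0 := Finset.prod_ne_zero_iff.2 fun i _ => hβ i
  have hη' : ∏ j, η j ≠ 0 := Finset.prod_ne_zero_iff.2 fun j _ => hη j
  field_simp
  ring

end Normalization

section Spectral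

variable {K : Type*} [Field K]

/-- The spectral parameter `t` at which the ratio of the weights `a₁` and `b₁` of `sixVertex s t`
is `z * α`. It is attached to a row with boundary variable `z`. -/
def rowSpectral (s α z : K) : K := (1 - s * z * α) / (s * (s - z * α))

/-- The weight `b₁` of `sixVertex s (rowSpectral s α z)`. -/
def rowScale (s α z : K) : K := (1 - s ^ 2) / (s - z * α)

/-- The spectral parameter of a column with boundary variable `z`, normalized to be `1` at
`z = 1`. -/
def colSpectral (s α z : K) : K := rowSpectral s α z / rowSpectral s α 1

/-- The factor by which a column with boundary variable `z` multiplies the weights `b₁`. -/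
def colScale (s α z : K) : K := rowScale s α z / rowScale s α 1

/-- The weight `y` of the entries `-1`, in the parametrization of the weights by `s` and `α`. The
weight `x` of the generalized inversions is `α ^ 2`. -/
def paramY (s α : K) : K := (s - α) * (1 - s * α) / s

/-- The correction to the weight `a₁` where a row and a column with boundary variables `z` and `z'`
cross: that weight is proportional to `topCoeff y z z' * z * z'` instead of `z * z'`. -/
def topCoeff (y z z' : K) : K := 1 - (z - 1) * (z' - 1) / (y * z * z')

/-- The correction to the weight `b₁` where a row and a column with boundary variables `z` and `z'`
cross: that weight is proportional to `bottomCoeff x y z z'` instead of `1`. -/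
def bottomCoeff (x y z z' : K) : K := 1 - x * (z - 1) * (z' - 1) / y

/-- The nondegeneracy conditions on the parameters `s` and `α`. -/
structure IsParam (s α : K) : Prop where
  s_ne_zero : s ≠ 0
  α_ne_zero : α ≠ 0
  one_sub_sq_ne_zero : 1 - s ^ 2 ≠ 0
  sub_ne_zero : s - α ≠ 0
  one_sub_mul_ne_zero : 1 - s * α ≠ 0

@[simp]
theorem topCoeff_one_left (y z' : K) : topCoeff y 1 z' = 1 := by simp [topCoeff]

@[simp]
theorem topCoeff_one_right (y z : K) : topCoeff y z 1 = 1 := by simp [topCoeff]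

@[simp]
theorem bottomCoeff_one_left (x y z' : K) : bottomCoeff x y 1 z' = 1 := by simp [bottomCoeff]

@[simp]
theorem bottomCoeff_one_right (x y z : K) : bottomCoeff x y z 1 = 1 := by simp [bottomCoeff]

theorem mul_topCoeff {y z z' : K} (hy : y ≠ 0) (hz : z ≠ 0) (hz' : z' ≠ 0) :
    y * z * z' * topCoeff y z z' = y * z * z' - (z - 1) * (z' - 1) := by
  rw [topCoeff]
  field_simp

theorem mul_bottomCoeff (x : K) {y : K} (hy : y ≠ 0) (z z' : K) :
    y * bottomCoeff x y z z' = y - x * (z - 1) * (z' - 1) := by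
  rw [bottomCoeff]
  field_simp

variable {s α z z' : K}

namespace IsParam

variable (h : IsParam s α)
include h

theorem sq_sub_one_ne_zero : s ^ 2 - 1 ≠ 0 := by
  rw [← neg_sub]
  exact neg_ne_zero.2 h.one_sub_sq_ne_zero

theorem paramY_ne_zero : paramY s α ≠ 0 :=
  div_ne_zero (mul_ne_zero h.sub_ne_zero h.one_sub_mul_ne_zero) h.s_ne_zero

theorem rowSpectral_one_ne_zero : rowSpectral s α 1 ≠ 0 := by
  simp [rowSpectral, h.s_ne_zero, h.sub_ne_zero, h.one_sub_mul_ne_zero]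

theorem rowScale_ne_zero (hz : s - z * α ≠ 0) : rowScale s α z ≠ 0 :=
  div_ne_zero h.one_sub_sq_ne_zero hz

theorem rowScale_one_ne_zero : rowScale s α 1 ≠ 0 :=
  h.rowScale_ne_zero (by simpa using h.sub_ne_zero)

theorem colScale_ne_zero (hz : s - z * α ≠ 0) : colScale s α z ≠ 0 :=
  div_ne_zero (h.rowScale_ne_zero hz) h.rowScale_one_ne_zero

theorem colSpectral_one : colSpectral s α 1 = 1 :=
  div_self h.rowSpectral_one_ne_zero

theorem colScale_one : colScale s α 1 = 1 :=
  div_self h.rowScale_one_ne_zero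

theorem a_spectral (hz : s - z * α ≠ 0) (hz' : s - z' * α ≠ 0) (hz₀ : z ≠ 0) (hz₀' : z' ≠ 0) :
    s ^ 2 * (rowSpectral s α z * colSpectral s α z') - 1 =
      α * (z * z' * topCoeff (paramY s α) z z') * (rowScale s α z * colScale s α z') := by
  obtain ⟨_, _, _, _, _⟩ := h
  have : s - α * z ≠ 0 := by rwa [mul_comm]
  have : s - α * z' ≠ 0 := by rwa [mul_comm]
  simp only [rowSpectral, colSpectral, rowScale, colScale, topCoeff, paramY, one_mul, mul_one]
  field_simp
  ring

theorem b_spectral (hz : s - z * α ≠ 0) (hz' : s - z' * α ≠ 0) :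
    s * (rowSpectral s α z * colSpectral s α z' - 1) =
      bottomCoeff (α ^ 2) (paramY s α) z z' * (rowScale s α z * colScale s α z') := by
  obtain ⟨_, -, -, _, _⟩ := h
  have : s - α * z ≠ 0 := by rwa [mul_comm]
  have : s - α * z' ≠ 0 := by rwa [mul_comm]
  simp only [rowSpectral, colSpectral, rowScale, colScale, bottomCoeff, paramY, one_mul, mul_one]
  field_simp
  ring

theorem c_spectral :
    (s ^ 2 - 1) ^ 2 * (rowSpectral s α 1 * colSpectral s α 1) =
      paramY s α * (rowScale s α 1 * colScale s α 1) ^ 2 := by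
  obtain ⟨_, -, -, _, _⟩ := h
  simp only [rowSpectral, colSpectral, rowScale, colScale, paramY, one_mul, mul_one]
  field_simp
  ring

end IsParam

end Spectral

section BoundaryVariables

variable {R : Type*} [One R] {n : ℕ}

/-- The boundary variables of the rows in `triWeight`: `z1` for the first row, `z2` for the last
row, and `1` for the others. -/
def rowVar (z1 z2 : R) (i : Fin (n + 1)) : R :=
  if i = 0 then z1 else if i = Fin.last n then z2 else 1

/-- The boundary variables of the columns in `triWeight`: `z` for the first column and `1` for the
others. -/
def colVar (z : R) (j : Fin (n + 1)) : R :=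
  if j = 0 then z else 1

theorem rowVar_one_one (i : Fin (n + 1)) : rowVar (1 : R) 1 i = 1 := by simp [rowVar]

theorem vecCons_one_eq_rowVar (z : R) : (vecCons z 1 : Fin (n + 1) → R) = rowVar z 1 := by
  ext i
  cases i using Fin.cases <;> simp [rowVar]

theorem vecCons_one_eq_colVar (z : R) : (vecCons z 1 : Fin (n + 1) → R) = colVar z := by
  ext i
  cases i using Fin.cases <;> simp [colVar]

theorem vecCons_vecCons_one_comp_swap (z1 z2 : R) :
    (vecCons z1 (vecCons z2 1) : Fin (n + 2) → R) ∘ Equiv.swap 1 (Fin.last _) = rowVar z1 z2 := by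
  ext i
  rcases eq_or_ne i 0 with rfl | h0
  · rw [Function.comp_apply, Equiv.swap_apply_of_ne_of_ne (by simp) (by simp)]
    simp [rowVar]
  rcases eq_or_ne i (Fin.last _) with rfl | hl
  · simp [rowVar]
  rw [rowVar, if_neg h0, if_neg hl, Function.comp_apply]
  rcases eq_or_ne i 1 with rfl | h1
  · obtain ⟨m, rfl⟩ : ∃ m, n = m + 1 := Nat.exists_eq_succ_of_ne_zero (by rintro rfl; simp at hl)
    rw [Equiv.swap_apply_left, ← Fin.succ_last, ← Fin.succ_last]
    rfl
  · rw [Equiv.swap_apply_of_ne_of_ne h1 hl]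
    obtain ⟨j, rfl⟩ := Fin.exists_succ_eq.2 h0
    obtain ⟨l, rfl⟩ := Fin.exists_succ_eq.2 fun hj : j = 0 => h1 (by rw [hj]; rfl)
    rfl

end BoundaryVariables

section DesnanotJacobi

variable {R S : Type*} [One R] [CommRing S] {n : ℕ}

theorem partitionFunction_comp_rowVar_comm (s : S) (f : R → S) (z1 z2 : R) (Y : Fin (n + 2) → S) :
    partitionFunction s (f ∘ rowVar z1 z2) Y = partitionFunction s (f ∘ rowVar z2 z1) Y := by
  have hrev : (rowVar z1 z2 : Fin (n + 2) → R) ∘ Fin.revPerm = rowVar z2 z1 := by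
    ext i
    simp only [rowVar, Function.comp_apply, Fin.revPerm_apply, Fin.rev_eq_iff, Fin.rev_zero,
      Fin.rev_last]
    rcases eq_or_ne i 0 with rfl | h0
    · simp
    · simp [h0]
  rw [← partitionFunction_comp_perm_left s (f ∘ rowVar z1 z2) Y Fin.revPerm, Function.comp_assoc,
    hrev]

theorem partitionFunction_comp_vecCons_vecCons_one (s : S) (f : R → S) (z1 z2 : R)
    (Y : Fin (n + 2) → S) :
    partitionFunction s (f ∘ vecCons z1 (vecCons z2 1)) Y =
      partitionFunction s (f ∘ rowVar z1 z2) Y := by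
  rw [← partitionFunction_comp_perm_left s _ Y (Equiv.swap 1 (Fin.last _)), Function.comp_assoc,
    vecCons_vecCons_one_comp_swap]

theorem partitionFunction_desnanotJacobi_rowVar_colVar (s : S) (f g : R → S) (z1 z2 z3 : R) :
    s ^ 2 * (f z2 - f z1) * (g 1 - g z3) *
        partitionFunction s (f ∘ (rowVar z1 z2 : Fin (n + 3) → R)) (g ∘ colVar z3) *
        partitionFunction s (f ∘ (rowVar 1 1 : Fin (n + 1) → R)) (g ∘ colVar 1) =
      abWeight s (f z1 * g 1) * abWeight s (f z2 * g z3) *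
          partitionFunction s (f ∘ (rowVar z1 1 : Fin (n + 2) → R)) (g ∘ colVar z3) *
          partitionFunction s (f ∘ (rowVar z2 1 : Fin (n + 2) → R)) (g ∘ colVar 1) -
        abWeight s (f z1 * g z3) * abWeight s (f z2 * g 1) *
          partitionFunction s (f ∘ (rowVar z1 1 : Fin (n + 2) → R)) (g ∘ colVar 1) *
          partitionFunction s (f ∘ (rowVar 1 z2 : Fin (n + 2) → R)) (g ∘ colVar z3) := by
  have hone (m : ℕ) : (vecCons 1 1 : Fin (m + 1) → R) = 1 := by
    ext i
    cases i using Fin.cases <;> simp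
  have hsucc {m : ℕ} (z : R) (w : Fin m → R) : vecCons z w ∘ Fin.succ = w := rfl
  have habove {m : ℕ} (z : R) (w : Fin (m + 1) → R) :
      vecCons z w ∘ Fin.succAbove 1 = vecCons z (w ∘ Fin.succ) := by
    ext i
    cases i using Fin.cases <;> simp
  have key := partitionFunction_desnanotJacobi s
    (f ∘ (vecCons z1 (vecCons z2 1) : Fin (n + 3) → R)) (g ∘ vecCons z3 1)
  simp only [partitionFunction_comp_vecCons_vecCons_one, Function.comp_assoc, habove, hsucc,
    Pi.one_comp] at key
  rw [partitionFunction_comp_rowVar_comm s f 1 z2]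
  simp only [← vecCons_one_eq_rowVar, ← vecCons_one_eq_colVar, hone]
  exact key

end DesnanotJacobi

section SpectralPartitionFunction

variable {K : Type*} [Field K] {s α z1 z2 z3 : K} {n : ℕ}

namespace IsParam

variable (h : IsParam s α)
include h

theorem partitionFunction_eq {w w' : Fin (n + 1) → K} (hw : ∀ i, s - w i * α ≠ 0)
    (hw' : ∀ j, s - w' j * α ≠ 0) (hw₀ : ∀ i, w i ≠ 0) (hw₀' : ∀ j, w' j ≠ 0) :
    partitionFunction s (rowSpectral s α ∘ w) (colSpectral s α ∘ w') =
      (s ^ 2 - 1) ^ (n + 1) * ((∏ i, rowScale s α (w i)) * ∏ j, colScale s α (w' j)) ^ n *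
        latticeSum fun i j =>
          { a₁ := w i * w' j * topCoeff (paramY s α) (w i) (w' j)
            a₂ := α ^ 2 * (w i * w' j * topCoeff (paramY s α) (w i) (w' j))
            b₁ := bottomCoeff (α ^ 2) (paramY s α) (w i) (w' j)
            b₂ := bottomCoeff (α ^ 2) (paramY s α) (w i) (w' j)
            c₁ := 1
            c₂ := (s ^ 2 - 1) ^ 2 * (rowSpectral s α (w i) * colSpectral s α (w' j)) /
              (rowScale s α (w i) * colScale s α (w' j)) ^ 2 } := by
  have hα := h.α_ne_zero
  have hβ i := h.rowScale_ne_zero (hw i)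
  have hη j := h.colScale_ne_zero (hw' j)
  rw [partitionFunction_eq_normalized h.sq_sub_one_ne_zero hα hβ hη]
  congr 2
  ext i j
  all_goals
    have := hβ i
    have := hη j
    simp only [Function.comp_apply, h.b_spectral (hw i) (hw' j),
      h.a_spectral (hw i) (hw' j) (hw₀ i) (hw₀' j)]
  all_goals field_simp

theorem partitionFunction_rowVar_colVar (h1 : s - z1 * α ≠ 0)
    (h2 : s - z2 * α ≠ 0) (h3 : s - z3 * α ≠ 0) (hz1 : z1 ≠ 0) (hz2 : z2 ≠ 0) (hz3 : z3 ≠ 0) :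
    partitionFunction s (rowSpectral s α ∘ (rowVar z1 z2 : Fin (n + 1) → K))
        (colSpectral s α ∘ colVar z3) =
      (s ^ 2 - 1) ^ (n + 1) *
        ((∏ i : Fin (n + 1), rowScale s α (rowVar z1 z2 i)) * colScale s α z3) ^ n *
        triSum n (α ^ 2) (paramY s α) z1 z2 z3 (topCoeff (paramY s α) z1 z3)
          (bottomCoeff (α ^ 2) (paramY s α) z2 z3) := by
  have h0 : s - 1 * α ≠ 0 := by simpa using h.sub_ne_zero
  have hc₂ : (s ^ 2 - 1) ^ 2 * (rowSpectral s α 1 * colSpectral s α 1) /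
      (rowScale s α 1 * colScale s α 1) ^ 2 = paramY s α := by
    rw [h.c_spectral, mul_div_cancel_right₀]
    exact pow_ne_zero _ (mul_ne_zero h.rowScale_one_ne_zero (h.colScale_ne_zero h0))
  have h0' : (1 : K) ≠ 0 := one_ne_zero
  rw [h.partitionFunction_eq]
  case hw | hw₀ => intro i; unfold rowVar; split_ifs <;> assumption
  case hw' | hw₀' => intro j; unfold colVar; split_ifs <;> assumption
  refine congrArg₂ (· * ·) ?_ ?_
  · simp [colVar, Fin.prod_univ_succ, h.colScale_one]
  · refine latticeSum_congr_weights ?_ ?_ ?_ ?_ ?_ ?_ <;> intro i j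
    · by_cases hi : i = 0 <;> by_cases hj : j = 0 <;>
        simp +contextual [rowVar, colVar, triWeight, hi, hj]
    · by_cases hi : i = Fin.last n <;> simp +contextual [rowVar, colVar, triWeight, hi]
    · by_cases hi : i = Fin.last n <;> by_cases hj : j = 0 <;>
        simp +contextual [rowVar, colVar, triWeight, hi, hj]
    · simp +contextual [rowVar, colVar, triWeight]
    · rfl
    · simp +contextual [rowVar, colVar, triWeight, hc₂]

end IsParam

end SpectralPartitionFunction

section Specializations

variable {R : Type*} [CommRing R] {n : ℕ}

theorem triSum_one_bottom (x y z1 z3 k1 : R) :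
    triSum (n + 1) x y z1 1 z3 k1 1 = k1 * Zadj (n + 2) x y z1 z3 + (1 - k1) * Zun (n + 1) x y := by
  rw [triSum_eq, Zadj, Zun]
  ring

theorem triSum_one_top {K : Type*} [Field K] {x : K} (hx : x ≠ 0) (y z2 z3 k2 : K) :
    triSum (n + 1) x y 1 z2 z3 1 k2 =
      k2 * Zbaradj (n + 2) x y z2 z3 + (1 - k2) * (x * z2 * z3) ^ (n + 1) * Zun (n + 1) x y := by
  rw [triSum_eq, Zbaradj, Zun, Zqua_rotate hx _ 1 1 z2 z3]
  ring

theorem triSum_one_one_one (x y z1 : R) : triSum n x y z1 1 1 1 1 = Zsing (n + 1) x y z1 :=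
  triSum_one_one x y z1 1 1

end Specializations

section SpectralDesnanotJacobi

variable {K : Type*} [Field K] {s α z1 z2 z3 : K} {n : ℕ}

namespace IsParam

variable (h : IsParam s α) (h1 : s - z1 * α ≠ 0) (h2 : s - z2 * α ≠ 0) (h3 : s - z3 * α ≠ 0)
include h h1 h2 h3

theorem rowSpectral_sub_mul_colSpectral_sub :
    s ^ 2 * (rowSpectral s α z2 - rowSpectral s α z1) * (colSpectral s α 1 - colSpectral s α z3) =
      -(α ^ 2 / paramY s α) * (rowScale s α z1 * rowScale s α z2 * colScale s α z3) *
        ((z2 - z1) * (z3 - 1)) := by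
  rw [h.colSpectral_one]
  obtain ⟨_, -, -, _, _⟩ := h
  have : s - α * z1 ≠ 0 := by rwa [mul_comm]
  have : s - α * z2 ≠ 0 := by rwa [mul_comm]
  have : s - α * z3 ≠ 0 := by rwa [mul_comm]
  simp only [rowSpectral, colSpectral, rowScale, colScale, paramY, one_mul, mul_one]
  field_simp
  ring

theorem abWeight_mul_abWeight_top (hz1 : z1 ≠ 0) (hz2 : z2 ≠ 0) (hz3 : z3 ≠ 0) :
    abWeight s (rowSpectral s α z1 * colSpectral s α 1) *
        abWeight s (rowSpectral s α z2 * colSpectral s α z3) =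
      -(α ^ 2 / paramY s α) * (rowScale s α z1 * rowScale s α z2 * colScale s α z3) ^ 2 *
        (((z2 - 1) * (z3 - 1) - paramY s α * z2 * z3) * z1 *
          bottomCoeff (α ^ 2) (paramY s α) z2 z3) := by
  have h0 : s - 1 * α ≠ 0 := by simpa using h.sub_ne_zero
  have hy := h.paramY_ne_zero
  rw [abWeight, abWeight, h.a_spectral h1 h0 hz1 one_ne_zero, h.b_spectral h1 h0,
    h.a_spectral h2 h3 hz2 hz3, h.b_spectral h2 h3, h.colScale_one, topCoeff_one_right,
    bottomCoeff_one_right]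
  have hcoeff : (z2 - 1) * (z3 - 1) - paramY s α * z2 * z3 =
      -(paramY s α * z2 * z3 * topCoeff (paramY s α) z2 z3) := by
    rw [mul_topCoeff hy hz2 hz3, neg_sub]
  rw [hcoeff]
  field_simp

theorem abWeight_mul_abWeight_bottom (hz1 : z1 ≠ 0) (hz2 : z2 ≠ 0) (hz3 : z3 ≠ 0) :
    abWeight s (rowSpectral s α z1 * colSpectral s α z3) *
        abWeight s (rowSpectral s α z2 * colSpectral s α 1) =
      -(α ^ 2 / paramY s α) * (rowScale s α z1 * rowScale s α z2 * colScale s α z3) ^ 2 *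
        ((α ^ 2 * (z1 - 1) * (z3 - 1) - paramY s α) * z1 * z2 * z3 *
          topCoeff (paramY s α) z1 z3) := by
  have h0 : s - 1 * α ≠ 0 := by simpa using h.sub_ne_zero
  have hy := h.paramY_ne_zero
  rw [abWeight, abWeight, h.a_spectral h1 h3 hz1 hz3, h.b_spectral h1 h3,
    h.a_spectral h2 h0 hz2 one_ne_zero, h.b_spectral h2 h0, h.colScale_one, topCoeff_one_right,
    bottomCoeff_one_right]
  have hcoeff : α ^ 2 * (z1 - 1) * (z3 - 1) - paramY s α =
      -(paramY s α * bottomCoeff (α ^ 2) (paramY s α) z1 z3) := by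
    rw [mul_bottomCoeff _ hy, neg_sub]
  rw [hcoeff]
  field_simp

omit h h1 h2 h3 in
theorem prod_rowScale_rowVar (s α z1 z2 : K) :
    ∏ i : Fin (n + 2), rowScale s α (rowVar z1 z2 i) =
      rowScale s α z1 * rowScale s α z2 * rowScale s α 1 ^ n := by
  simp only [rowVar, ← Fin.succ_last, Fin.prod_univ_succ (n := n + 1), if_true, Fin.succ_ne_zero,
    if_false, Fin.succ_inj, Fin.prod_univ_castSucc (n := n), Fin.castSucc_ne_last, prod_const,
    card_univ, Fintype.card_fin]
  ring

theorem desnanotJacobi_triSum (hz1 : z1 ≠ 0) (hz2 : z2 ≠ 0) (hz3 : z3 ≠ 0) :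
    (z2 - z1) * (z3 - 1) *
        triSum (n + 2) (α ^ 2) (paramY s α) z1 z2 z3 (topCoeff (paramY s α) z1 z3)
          (bottomCoeff (α ^ 2) (paramY s α) z2 z3) * Zun (n + 1) (α ^ 2) (paramY s α) =
      ((z2 - 1) * (z3 - 1) - paramY s α * z2 * z3) * z1 *
          bottomCoeff (α ^ 2) (paramY s α) z2 z3 *
          triSum (n + 1) (α ^ 2) (paramY s α) z1 1 z3 (topCoeff (paramY s α) z1 z3) 1 *
          Zsing (n + 2) (α ^ 2) (paramY s α) z2 -
        (α ^ 2 * (z1 - 1) * (z3 - 1) - paramY s α) * z1 * z2 * z3 *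
          topCoeff (paramY s α) z1 z3 * Zsing (n + 2) (α ^ 2) (paramY s α) z1 *
          triSum (n + 1) (α ^ 2) (paramY s α) 1 z2 z3 1
            (bottomCoeff (α ^ 2) (paramY s α) z2 z3) := by
  have h0 : s - 1 * α ≠ 0 := by simpa using h.sub_ne_zero
  have h01 : (1 : K) ≠ 0 := one_ne_zero
  have key := partitionFunction_desnanotJacobi_rowVar_colVar (n := n) s (rowSpectral s α)
    (colSpectral s α) z1 z2 z3
  rw [h.partitionFunction_rowVar_colVar h1 h2 h3 hz1 hz2 hz3,
    h.partitionFunction_rowVar_colVar h0 h0 h0 h01 h01 h01,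
    h.partitionFunction_rowVar_colVar h1 h0 h3 hz1 h01 hz3,
    h.partitionFunction_rowVar_colVar h2 h0 h0 hz2 h01 h01,
    h.partitionFunction_rowVar_colVar h1 h0 h0 hz1 h01 h01,
    h.partitionFunction_rowVar_colVar h0 h2 h3 h01 hz2 hz3,
    h.rowSpectral_sub_mul_colSpectral_sub h1 h2 h3,
    h.abWeight_mul_abWeight_top h1 h2 h3 hz1 hz2 hz3,
    h.abWeight_mul_abWeight_bottom h1 h2 h3 hz1 hz2 hz3] at key
  simp only [topCoeff_one_left, topCoeff_one_right, bottomCoeff_one_left, bottomCoeff_one_right,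
    triSum_one_one_one, h.colScale_one, prod_rowScale_rowVar, rowVar_one_one, Finset.prod_const,
    Finset.card_univ, Fintype.card_fin] at key
  have hscale : -(α ^ 2 / paramY s α) * (s ^ 2 - 1) ^ (2 * n + 4) *
      (rowScale s α z1 * rowScale s α z2 * colScale s α z3) ^ (n + 3) *
      rowScale s α 1 ^ ((n + 1) * (2 * n + 2)) ≠ 0 := by
    simp [h.α_ne_zero, h.sq_sub_one_ne_zero, h.rowScale_ne_zero h1, h.rowScale_ne_zero h2,
      h.colScale_ne_zero h3, h.rowScale_one_ne_zero, h.paramY_ne_zero]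
  refine mul_left_cancel₀ hscale ?_
  rw [Zun, ← Zsing]
  linear_combination key

end IsParam

end SpectralDesnanotJacobi

/-! ### The identity at generic parameters and by specialization -/

section TriDefect

variable {R S : Type*} [CommRing R] [CommRing S]

/-- The difference of the two sides of the identity for `Ztri (k + 3)`. -/
noncomputable def triDefect (k : ℕ) (x y z1 z2 z3 : R) : R :=
  (z2 - z1) * (z3 - 1) * Ztri (k + 3) x y z1 z2 z3 * Zun (k + 1) x y -
    (((z2 - 1) * (z3 - 1) - y * z2 * z3) * z1 * Zadj (k + 2) x y z1 z3 * Zsing (k + 2) x y z2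
      - (x * (z1 - 1) * (z3 - 1) - y) * z1 * z2 * z3 *
          Zbaradj (k + 2) x y z2 z3 * Zsing (k + 2) x y z1
      - (z1 - 1) * (z3 - 1) * z2 * Zsing (k + 2) x y z2 * Zun (k + 1) x y
      + (z2 - 1) * (z3 - 1) * z1 * (x * z2 * z3) ^ (k + 2) *
          Zsing (k + 2) x y z1 * Zun (k + 1) x y)

theorem map_triDefect (φ : R →+* S) (k : ℕ) (x y z1 z2 z3 : R) :
    φ (triDefect k x y z1 z2 z3) = triDefect k (φ x) (φ y) (φ z1) (φ z2) (φ z3) := by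
  simp only [triDefect, Ztri, Zun, Zadj, Zsing, Zbaradj, map_sub, map_add, map_mul, map_pow,
    map_one, ← Zqua_map]

/-- A polynomial which vanishes wherever one of the divisions in the parametrization of the weights
is not allowed. -/
def genericFactor (x y z1 z2 z3 : R) : R :=
  x * y * (z1 * z2 * z3) * ((x + 1 - y) ^ 2 - 4 * x) *
    (z1 ^ 2 * x + 1 - z1 * (x + 1 - y)) * (z2 ^ 2 * x + 1 - z2 * (x + 1 - y)) *
    (z3 ^ 2 * x + 1 - z3 * (x + 1 - y)) *
    (y * z1 * z3 - (z1 - 1) * (z3 - 1)) * (y - x * (z2 - 1) * (z3 - 1))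

theorem map_genericFactor (φ : R →+* S) (x y z1 z2 z3 : R) :
    φ (genericFactor x y z1 z2 z3) = genericFactor (φ x) (φ y) (φ z1) (φ z2) (φ z3) := by
  simp only [genericFactor, map_sub, map_add, map_mul, map_pow, map_one, map_ofNat]

end TriDefect

section Generic

variable {K : Type*} [Field K] {s α x y z1 z2 z3 : K}

theorem IsParam.triDefect_eq_zero (h : IsParam s α) (k : ℕ) (h1 : s - z1 * α ≠ 0)
    (h2 : s - z2 * α ≠ 0) (h3 : s - z3 * α ≠ 0) (hz1 : z1 ≠ 0) (hz2 : z2 ≠ 0) (hz3 : z3 ≠ 0)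
    (hk1 : paramY s α * z1 * z3 - (z1 - 1) * (z3 - 1) ≠ 0)
    (hk2 : paramY s α - α ^ 2 * (z2 - 1) * (z3 - 1) ≠ 0) :
    triDefect k (α ^ 2) (paramY s α) z1 z2 z3 = 0 := by
  have hx : α ^ 2 ≠ 0 := pow_ne_zero _ h.α_ne_zero
  have key := h.desnanotJacobi_triSum (n := k) h1 h2 h3 hz1 hz2 hz3
  rw [triSum_one_bottom, triSum_one_top hx, triSum_eq, Zqua_rotate hx _ 1 1 z2 1] at key
  have htop := mul_topCoeff h.paramY_ne_zero hz1 hz3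
  have hbottom := mul_bottomCoeff (α ^ 2) h.paramY_ne_zero z2 z3
  have htop₀ : topCoeff (paramY s α) z1 z3 ≠ 0 := right_ne_zero_of_mul (htop ▸ hk1)
  have hbottom₀ : bottomCoeff (α ^ 2) (paramY s α) z2 z3 ≠ 0 :=
    right_ne_zero_of_mul (hbottom ▸ hk2)
  refine (mul_eq_zero.1 ?_).resolve_left (mul_ne_zero htop₀ hbottom₀)
  simp only [triDefect, Ztri, Zsing, Zun, Zadj, Zbaradj] at key ⊢
  generalize topCoeff (paramY s α) z1 z3 = κ₁ at *
  generalize bottomCoeff (α ^ 2) (paramY s α) z2 z3 = κ₂ at *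
  generalize paramY s α = y at *
  generalize α ^ 2 = x at *
  linear_combination key + κ₂ * z2 * Zqua (k + 2) x y z2 1 1 1 * Zqua (k + 1) x y 1 1 1 1 * htop -
    κ₁ * z1 * z2 * z3 * (x * z2 * z3) ^ (k + 1) * Zqua (k + 2) x y z1 1 1 1 *
      Zqua (k + 1) x y 1 1 1 1 * hbottom

theorem exists_isParam [IsAlgClosed K] (hx : x ≠ 0) (hy : y ≠ 0)
    (hd : (x + 1 - y) ^ 2 - 4 * x ≠ 0) :
    ∃ s α : K, IsParam s α ∧ x = α ^ 2 ∧ y = paramY s α := by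
  obtain ⟨α, rfl⟩ := IsAlgClosed.exists_pow_nat_eq x two_pos
  have hα : α ≠ 0 := by rintro rfl; simp at hx
  obtain ⟨s, hs⟩ : ∃ s : K, α * s ^ 2 + -(α ^ 2 + 1 - y) * s + α = 0 := by
    obtain ⟨s, hs⟩ := IsAlgClosed.exists_root
      (Polynomial.C α * Polynomial.X ^ 2 + Polynomial.C (-(α ^ 2 + 1 - y)) * Polynomial.X +
        Polynomial.C α) (by rw [Polynomial.degree_quadratic hα]; exact two_ne_zero)
    exact ⟨s, by simpa [Polynomial.IsRoot] using hs⟩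
  have hs₀ : s ≠ 0 := by
    rintro rfl
    exact hα (by linear_combination hs)
  have hys : y * s = (s - α) * (1 - s * α) := by linear_combination hs
  have hfactors := mul_ne_zero_iff.1 (hys ▸ mul_ne_zero hy hs₀)
  refine ⟨s, α, ⟨hs₀, hα, fun hs₁ => hd ?_, hfactors.1, hfactors.2⟩, rfl, (eq_div_iff hs₀).2 hys⟩
  have e : (α ^ 2 + 1 - y) * s = 2 * α := by linear_combination -hs - α * hs₁
  linear_combination ((α ^ 2 + 1 - y) * s + 2 * α) * e + (α ^ 2 + 1 - y) ^ 2 * hs₁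

theorem IsParam.sub_mul_ne_zero (h : IsParam s α) {z : K}
    (hz : z ^ 2 * α ^ 2 + 1 - z * (α ^ 2 + 1 - paramY s α) ≠ 0) : s - z * α ≠ 0 := by
  intro h0
  obtain rfl : s = z * α := sub_eq_zero.1 h0
  refine hz ?_
  have := left_ne_zero_of_mul h.s_ne_zero
  have := h.α_ne_zero
  rw [paramY]
  field_simp
  ring

theorem triDefect_eq_zero_of_genericFactor_ne_zero [IsAlgClosed K] (k : ℕ)
    (h : genericFactor x y z1 z2 z3 ≠ 0) : triDefect k x y z1 z2 z3 = 0 := by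
  simp only [genericFactor, mul_ne_zero_iff] at h
  obtain ⟨⟨⟨⟨⟨⟨⟨⟨hx, hy⟩, ⟨hz1, hz2⟩, hz3⟩, hd⟩, h1⟩, h2⟩, h3⟩, hk1⟩, hk2⟩ := h
  obtain ⟨s, α, hp, rfl, rfl⟩ := exists_isParam hx hy hd
  exact hp.triDefect_eq_zero k (hp.sub_mul_ne_zero h1) (hp.sub_mul_ne_zero h2)
    (hp.sub_mul_ne_zero h3) hz1 hz2 hz3 hk1 hk2

end Generic

section Universal

open MvPolynomial

theorem genericFactor_X_ne_zero :
    genericFactor (X 0) (X 1) (X 2) (X 3) (X 4) ≠ (0 : MvPolynomial (Fin 5) ℤ) := by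
  intro h
  have h' := congrArg (eval ![(2 : ℤ), 1, 1, 1, 1]) h
  rw [map_genericFactor] at h'
  simp [genericFactor] at h'

theorem triDefect_X (k : ℕ) :
    triDefect k (X 0) (X 1) (X 2) (X 3) (X 4) = (0 : MvPolynomial (Fin 5) ℤ) := by
  refine (mul_eq_zero.1 ?_).resolve_left genericFactor_X_ne_zero
  refine map_injective (Int.castRingHom ℂ) Int.cast_injective (MvPolynomial.funext fun p => ?_)
  rw [map_mul, map_mul, map_genericFactor, map_genericFactor, map_triDefect, map_triDefect,
    map_zero, map_zero, mul_eq_zero]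
  exact or_iff_not_imp_left.2 fun h => triDefect_eq_zero_of_genericFactor_ne_zero k h

theorem triDefect_eq_zero {R : Type*} [CommRing R] (k : ℕ) (x y z1 z2 z3 : R) :
    triDefect k x y z1 z2 z3 = 0 := by
  have h := congrArg (eval₂Hom (Int.castRingHom R) ![x, y, z1, z2, z3]) (triDefect_X k)
  rw [map_triDefect, map_zero] at h
  simp only [coe_eval₂Hom, eval₂_X] at h
  exact h

end Universal

/-- Identity for the triply-refined ASM generating function, stated for all
values of the variables in any commutative ring, equivalently as an identity of
polynomials in `ℤ[x,y,z1,z2,z3]`. -/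
theorem stmt1 {R : Type*} [CommRing R] (x y z1 z2 z3 : R) (n : ℕ) (hn : 3 ≤ n) :
    (z2 - z1) * (z3 - 1) * Ztri n x y z1 z2 z3 * Zun (n - 2) x y =
      ((z2 - 1) * (z3 - 1) - y * z2 * z3) * z1 *
          Zadj (n - 1) x y z1 z3 * Zsing (n - 1) x y z2
      - (x * (z1 - 1) * (z3 - 1) - y) * z1 * z2 * z3 *
          Zbaradj (n - 1) x y z2 z3 * Zsing (n - 1) x y z1
      - (z1 - 1) * (z3 - 1) * z2 * Zsing (n - 1) x y z2 * Zun (n - 2) x y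
      + (z2 - 1) * (z3 - 1) * z1 * (x * z2 * z3) ^ (n - 1) *
          Zsing (n - 1) x y z1 * Zun (n - 2) x y := by
  obtain ⟨k, rfl⟩ : ∃ k, n = k + 3 := ⟨n - 3, by omega⟩
  exact sub_eq_zero.1 (triDefect_eq_zero k x y z1 z2 z3)
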